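/- Let H be a finite abelian group with exponent exp(H) = m ≥ 2, let n be a positive integer with n ≥ 2m|H| + 2|H|, and let G = C_{mn} ⊕ H. Then for every integer k ≥ 2, s_{kmnℕ}(G) = kmn + D(G) − 1. -/

import Mathlib

/-- `T` is a 1-product sequence: its terms can be ordered so that their product is `1`. -/
def IsOneProdSeq {G : Type*} [Group G] (T : Multiset G) : Prop :=
  ∃ l : List G, (l : Multiset G) = T ∧ l.prod = 1

section Part1

open scoped Classical Pointwise

namespace Dav

section Sums

variable {C : Type*} [AddCommGroup C]

/-- `A` plus the set of subset sums of `E`. -/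
noncomputable def sums (A : Finset C) (E : Multiset C) : Finset C :=
  A + (E.powerset.map Multiset.sum).toFinset

/-- stabilizer of a finite set -/
noncomputable def stab (A : Finset C) : AddSubgroup C := AddAction.stabilizer C A

theorem mem_stab {A : Finset C} {x : C} : x ∈ stab A ↔ x +ᵥ A = A :=
  AddAction.mem_stabilizer_iff

theorem mem_sums {A : Finset C} {E : Multiset C} {x : C} :
    x ∈ sums A E ↔ ∃ a ∈ A, ∃ F ≤ E, a + F.sum = x := by
  unfold sums
  simp only [Finset.mem_add, Multiset.mem_toFinset, Multiset.mem_map, Multiset.mem_powerset]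
  constructor
  · rintro ⟨a, ha, _, ⟨F, hF, rfl⟩, rfl⟩
    exact ⟨a, ha, F, hF, rfl⟩
  · rintro ⟨a, ha, F, hF, rfl⟩
    exact ⟨a, ha, _, ⟨F, hF, rfl⟩, rfl⟩

theorem sums_zero (A : Finset C) : sums A 0 = A := by
  ext x; simp [mem_sums]

theorem sums_cons (A : Finset C) (x : C) (E : Multiset C) :
    sums A (x ::ₘ E) = sums A E ∪ (x +ᵥ sums A E) := by
  ext y
  simp only [Finset.mem_union, mem_sums, Finset.mem_vadd_finset]
  constructor
  · rintro ⟨a, ha, F, hF, rfl⟩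
    by_cases hx : x ∈ F
    · right
      refine ⟨a + (F.erase x).sum, ⟨a, ha, F.erase x, ?_, rfl⟩, ?_⟩
      · exact Multiset.erase_le_iff_le_cons.2 hF
      · have := Multiset.cons_erase hx
        conv_rhs => rw [← this]
        simp [vadd_eq_add]; abel
    · left
      exact ⟨a, ha, F, (Multiset.le_cons_of_notMem hx).1 hF, rfl⟩
  · rintro (⟨a, ha, F, hF, rfl⟩ | ⟨_, ⟨a, ha, F, hF, rfl⟩, rfl⟩)
    · exact ⟨a, ha, F, hF.trans (Multiset.le_cons_self _ _), rfl⟩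
    · refine ⟨a, ha, x ::ₘ F, Multiset.cons_le_cons _ hF, ?_⟩
      simp [vadd_eq_add]; abel

theorem sums_mono {A : Finset C} {E F : Multiset C} (h : E ≤ F) : sums A E ⊆ sums A F := by
  intro x
  simp only [mem_sums]
  rintro ⟨a, ha, G, hG, rfl⟩
  exact ⟨a, ha, G, hG.trans h, rfl⟩

theorem subset_sums (A : Finset C) (E : Multiset C) : A ⊆ sums A E := by
  have := sums_mono (A := A) (Multiset.zero_le E)
  rwa [sums_zero] at this

theorem sums_nonempty {A : Finset C} (hA : A.Nonempty) (E : Multiset C) : (sums A E).Nonempty :=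
  hA.mono (subset_sums A E)

theorem sums_add (A : Finset C) (E F : Multiset C) : sums A (E + F) = sums (sums A E) F := by
  induction F using Multiset.induction_on with
  | empty => simp [sums_zero]
  | cons x F ih => rw [Multiset.add_cons, sums_cons, sums_cons, ih]

/-- If all `E` lies in the subgroup and `A` too, the sums stay in it. -/
theorem sums_subset_subgroup {A : Finset C} {E : Multiset C} {Q : AddSubgroup C}
    (hA : ∀ a ∈ A, a ∈ Q) (hE : ∀ e ∈ E, e ∈ Q) : ∀ x ∈ sums A E, x ∈ Q := by
  intro x hx
  obtain ⟨a, ha, F, hF, rfl⟩ := mem_sums.1 hx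
  exact Q.add_mem (hA a ha) (Q.multiset_sum_mem _ fun y hy => hE y (Multiset.mem_of_le hF hy))

theorem stab_vadd {A : Finset C} {Q : AddSubgroup C} (h : Q ≤ stab A) (x : C) :
    Q ≤ stab (x +ᵥ A) := by
  intro q hq
  have := mem_stab.1 (h hq)
  rw [mem_stab, vadd_comm, this]

theorem stab_union {A B : Finset C} {Q : AddSubgroup C} (h : Q ≤ stab A) (h' : Q ≤ stab B) :
    Q ≤ stab (A ∪ B) := by
  intro q hq
  have h1 := mem_stab.1 (h hq)
  have h2 := mem_stab.1 (h' hq)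
  rw [mem_stab, Finset.vadd_finset_union, h1, h2]

theorem stab_sums (A : Finset C) (E : Multiset C) {Q : AddSubgroup C} (h : Q ≤ stab A) :
    Q ≤ stab (sums A E) := by
  induction E using Multiset.induction_on with
  | empty => rwa [sums_zero]
  | cons x E ih => rw [sums_cons]; exact stab_union ih (stab_vadd ih x)

theorem stab_sums_mono (A : Finset C) {E F : Multiset C} (h : E ≤ F) :
    stab (sums A E) ≤ stab (sums A F) := by
  obtain ⟨D, rfl⟩ := Multiset.le_iff_exists_add.1 h
  rw [sums_add]
  exact stab_sums _ _ le_rfl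

theorem vadd_mem_of_stab {A : Finset C} {q a : C} (hq : q ∈ stab A) (ha : a ∈ A) : q + a ∈ A := by
  have h := mem_stab.1 hq
  rw [← h]
  exact Finset.vadd_mem_vadd_finset ha

theorem mem_of_vadd_mem {A : Finset C} {q a : C} (hq : q ∈ stab A) (ha : q + a ∈ A) : a ∈ A := by
  have := vadd_mem_of_stab (neg_mem hq) ha
  simpa using this

theorem le_stab_of_mem {A : Finset C} {Q : AddSubgroup C}
    (h : ∀ q ∈ Q, ∀ a ∈ A, q + a ∈ A) : Q ≤ stab A := by
  intro q hq
  rw [mem_stab]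
  apply Finset.Subset.antisymm
  · intro x hx
    obtain ⟨a, ha, rfl⟩ := Finset.mem_vadd_finset.1 hx
    exact h q hq a ha
  · intro x hx
    refine Finset.mem_vadd_finset.2 ⟨-q + x, h _ (neg_mem hq) _ hx, by simp⟩

theorem sums_of_stab {A : Finset C} {E : Multiset C} (h : ∀ x ∈ E, x ∈ stab A) :
    sums A E = A := by
  induction E using Multiset.induction_on with
  | empty => exact sums_zero A
  | cons x E ih =>
    rw [sums_cons, ih fun y hy => h y (Multiset.mem_cons_of_mem hy),
      mem_stab.1 (h x (Multiset.mem_cons_self _ _)), Finset.union_self]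

theorem sums_base_mono {A B : Finset C} (h : A ⊆ B) (E : Multiset C) : sums A E ⊆ sums B E := by
  intro x hx
  obtain ⟨a, ha, F, hF, rfl⟩ := mem_sums.1 hx
  exact mem_sums.2 ⟨a, h ha, F, hF, rfl⟩

variable [Fintype C]

noncomputable def sg (Q : AddSubgroup C) : Finset C := Finset.univ.filter (· ∈ Q)

@[simp] theorem mem_sg {Q : AddSubgroup C} {x : C} : x ∈ sg Q ↔ x ∈ Q := by simp [sg]

@[simp] theorem card_sg (Q : AddSubgroup C) : (sg Q).card = Nat.card Q := by
  rw [sg, Nat.card_eq_fintype_card, Fintype.card_subtype]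

theorem le_stab_sg (Q : AddSubgroup C) : Q ≤ stab (sg Q) :=
  le_stab_of_mem fun _ hq _ ha => mem_sg.2 (Q.add_mem hq (mem_sg.1 ha))

/-- periodic sets grow by at least the period -/
theorem per_growth {A B : Finset C} {Q : AddSubgroup C} (hA : Q ≤ stab A) (hB : Q ≤ stab B)
    (hAB : A ⊆ B) (hne : A ≠ B) : A.card + Nat.card Q ≤ B.card := by
  obtain ⟨z, hzB, hzA⟩ : ∃ z ∈ B, z ∉ A := by
    by_contra! h
    exact hne (Finset.Subset.antisymm hAB h)
  have hd : Disjoint A (z +ᵥ sg Q) := by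
    rw [Finset.disjoint_left]
    intro a ha ha'
    obtain ⟨q, hq, rfl⟩ := Finset.mem_vadd_finset.1 ha'
    rw [mem_sg] at hq
    apply hzA
    apply mem_of_vadd_mem (hA hq)
    rwa [vadd_eq_add, add_comm] at ha
  have hs : A ∪ (z +ᵥ sg Q) ⊆ B := by
    apply Finset.union_subset hAB
    intro a ha'
    obtain ⟨q, hq, rfl⟩ := Finset.mem_vadd_finset.1 ha'
    rw [mem_sg] at hq
    rw [vadd_eq_add, add_comm]
    exact vadd_mem_of_stab (hB hq) hzB
  have := Finset.card_le_card hs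
  rwa [Finset.card_union_of_disjoint hd, Finset.card_vadd_finset, card_sg] at this

theorem growth_step {A : Finset C} {Q : AddSubgroup C} (hA : Q ≤ stab A) {x : C}
    (hx : x ∉ stab A) : A.card + Nat.card Q ≤ (A ∪ (x +ᵥ A)).card := by
  apply per_growth hA (stab_union hA (stab_vadd hA x)) (Finset.subset_union_left (s₁ := A))
  intro h
  apply hx
  rw [mem_stab]
  apply Finset.eq_of_subset_of_card_le
  · have h2 := Finset.subset_union_right (s₁ := A) (s₂ := x +ᵥ A)
    rwa [← h] at h2
  · rw [Finset.card_vadd_finset]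

/-- subselection -/
theorem KL (A0 : Finset C) (Q : AddSubgroup C) (hQ : Q ≤ stab A0) (E : Multiset C) :
    ∃ E' ≤ E, sums A0 E' = sums A0 E ∧
      A0.card + Nat.card Q * Multiset.card E' ≤ (sums A0 E).card := by
  induction E using Multiset.induction_on with
  | empty => exact ⟨0, le_rfl, rfl, by simp [sums_zero]⟩
  | cons x E ih =>
    obtain ⟨E', hE', hs, hc⟩ := ih
    by_cases hx : x ∈ stab (sums A0 E)
    · refine ⟨E', hE'.trans (Multiset.le_cons_self _ _), ?_, ?_⟩
      · rw [sums_cons, mem_stab.1 hx, hs, Finset.union_self]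
      · rw [sums_cons, mem_stab.1 hx, Finset.union_self]; exact hc
    · refine ⟨x ::ₘ E', Multiset.cons_le_cons _ hE', ?_, ?_⟩
      · rw [sums_cons, sums_cons, hs]
      · rw [sums_cons, Multiset.card_cons]
        have := growth_step (stab_sums A0 E hQ) hx
        rw [mul_add, mul_one]; omega

theorem K_aux (A0 : Finset C) (Q : AddSubgroup C) (hQ : Q ≤ stab A0) (E : Multiset C)
    (hE : ∀ x ∈ E, x ∉ stab (sums A0 E)) :
    A0.card + Nat.card Q * Multiset.card E ≤ (sums A0 E).card := by
  induction E using Multiset.induction_on with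
  | empty => simp [sums_zero]
  | cons x E ih =>
    have hm := stab_sums_mono A0 (Multiset.le_cons_self E x)
    have ih' := ih fun y hy h => hE y (Multiset.mem_cons_of_mem hy) (hm h)
    have hx : x ∉ stab (sums A0 E) := fun h => hE x (Multiset.mem_cons_self _ _) (hm h)
    have := growth_step (stab_sums A0 E hQ) hx
    rw [sums_cons, Multiset.card_cons, mul_add, mul_one]; omega

/-- Lemma K. -/
theorem K (A0 : Finset C) (E : Multiset C) (hA : A0.Nonempty) (Q : AddSubgroup C)
    (hQ : stab (sums A0 E) = Q) :
    Nat.card Q + Nat.card Q * Multiset.card (E.filter (· ∉ Q)) ≤ (sums A0 E).card := by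
  set B := A0 + sg Q with hB
  have hBQ : Q ≤ stab B := by
    apply le_stab_of_mem
    intro q hq a ha
    obtain ⟨x, hx, y, hy, rfl⟩ := Finset.mem_add.1 ha
    rw [mem_sg] at hy
    refine Finset.mem_add.2 ⟨x, hx, q + y, mem_sg.2 (Q.add_mem hq hy), by abel⟩
  have hAB : A0 ⊆ B := by
    intro a ha
    exact Finset.mem_add.2 ⟨a, ha, 0, mem_sg.2 Q.zero_mem, add_zero a⟩
  have e1 : sums B E = sums A0 E := by
    apply Finset.Subset.antisymm
    · intro x hx
      obtain ⟨b, hb, F, hF, rfl⟩ := mem_sums.1 hx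
      obtain ⟨a, ha, y, hy, rfl⟩ := Finset.mem_add.1 hb
      rw [mem_sg] at hy
      have : a + F.sum ∈ sums A0 E := mem_sums.2 ⟨a, ha, F, hF, rfl⟩
      have := vadd_mem_of_stab (hQ ▸ hy) this
      convert this using 1; abel
    · exact sums_base_mono hAB E
  have e2 : sums B (E.filter (· ∉ Q)) = sums A0 E := by
    rw [← e1]
    conv_rhs => rw [← Multiset.filter_add_not (· ∉ Q) E]
    rw [sums_add]
    symm
    apply sums_of_stab
    intro x hx
    have := (Multiset.mem_filter.1 hx).2
    exact stab_sums _ _ hBQ (not_not.1 this)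
  have h3 := K_aux B Q hBQ (E.filter (· ∉ Q)) (by
    intro x hx
    rw [e2, hQ]
    exact (Multiset.mem_filter.1 hx).2)
  rw [e2] at h3
  have h4 : Nat.card Q ≤ B.card := by
    obtain ⟨a, ha⟩ := hA
    have : a +ᵥ sg Q ⊆ B := by
      intro x hx
      obtain ⟨q, hq, rfl⟩ := Finset.mem_vadd_finset.1 hx
      exact Finset.mem_add.2 ⟨a, ha, q, hq, rfl⟩
    have := Finset.card_le_card this
    rwa [Finset.card_vadd_finset, card_sg] at this
  omega

theorem K' (A0 : Finset C) (E : Multiset C) (hA : A0.Nonempty) (Q : AddSubgroup C)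
    (hQ : stab (sums A0 E) = Q) (hne : sums A0 E ≠ Finset.univ) :
    Nat.card Q * (Multiset.card (E.filter (· ∉ Q)) + 2) ≤ Nat.card C := by
  have h1 := K A0 E hA Q hQ
  have h2 := per_growth (B := Finset.univ) hQ.ge
    (le_stab_of_mem fun q _ a _ => Finset.mem_univ _) (Finset.subset_univ _) hne
  rw [Finset.card_univ, ← Nat.card_eq_fintype_card] at h2
  rw [mul_add]; omega

end Sums

end Dav

end Part1

section Part2

open scoped Classical Pointwise

namespace Dav

section Sel

theorem exists_le_card {α : Type*} (s : Multiset α) {r : ℕ} (h : r ≤ Multiset.card s) :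
    ∃ t ≤ s, Multiset.card t = r := by
  induction s using Multiset.induction_on generalizing r with
  | empty => exact ⟨0, le_rfl, by simp at h; simp [h]⟩
  | cons x s ih =>
    cases r with
    | zero => exact ⟨0, Multiset.zero_le _, rfl⟩
    | succ r =>
      obtain ⟨t, ht, hc⟩ := ih (r := r) (by simpa using h)
      exact ⟨x ::ₘ t, Multiset.cons_le_cons _ ht, by simp [hc]⟩

theorem lift_le {α β : Type*} (f : α → β) (W : Multiset α) (P : Multiset β) (h : P ≤ W.map f) :
    ∃ P' ≤ W, P'.map f = P := by
  induction W using Multiset.induction_on generalizing P with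
  | empty => exact ⟨0, le_rfl, by simp at h; simp [h]⟩
  | cons x W ih =>
    rw [Multiset.map_cons] at h
    by_cases hx : f x ∈ P
    · obtain ⟨P', hP', hm⟩ := ih (P.erase (f x)) (Multiset.erase_le_iff_le_cons.2 h)
      exact ⟨x ::ₘ P', Multiset.cons_le_cons _ hP', by
        rw [Multiset.map_cons, hm, Multiset.cons_erase hx]⟩
    · obtain ⟨P', hP', hm⟩ := ih P ((Multiset.le_cons_of_notMem hx).1 h)
      exact ⟨P', hP'.trans (Multiset.le_cons_self _ _), hm⟩

variable {G : Type*} [AddCommGroup G]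

/-- multiset of differences of a multiset of pairs -/
def diffs (P : Multiset (G × G)) : Multiset G := P.map fun p => p.2 - p.1

/-- both components -/
def both {α : Type*} (P : Multiset (α × α)) : Multiset α := P.map Prod.fst + P.map Prod.snd

theorem card_both {α : Type*} (P : Multiset (α × α)) :
    Multiset.card (both P) = 2 * Multiset.card P := by
  simp [both]; omega

theorem both_add {α : Type*} (P P' : Multiset (α × α)) : both (P + P') = both P + both P' := by
  simp only [both, Multiset.map_add]; abel

theorem both_cons {α : Type*} (p : α × α) (P : Multiset (α × α)) :
    both (p ::ₘ P) = p.1 ::ₘ p.2 ::ₘ both P := by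
  simp [both]; rw [Multiset.cons_swap]

theorem card_diffs (P : Multiset (G × G)) : Multiset.card (diffs P) = Multiset.card P := by
  simp [diffs]

theorem diffs_add (P P' : Multiset (G × G)) : diffs (P + P') = diffs P + diffs P' := by
  simp [diffs]

theorem diffs_cons (p : G × G) (P : Multiset (G × G)) :
    diffs (p ::ₘ P) = (p.2 - p.1) ::ₘ diffs P := by
  simp [diffs]

theorem sum_diffs (P : Multiset (G × G)) :
    (diffs P).sum = (P.map Prod.snd).sum - (P.map Prod.fst).sum := by
  simp [diffs, Multiset.sum_map_sub]

/-- choose one element of each pair -/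
theorem pair_sel (P F : Multiset (G × G)) (h : F ≤ P) :
    ∃ U ≤ both P, Multiset.card U = Multiset.card P ∧
      U.sum = (P.map Prod.fst).sum + (diffs F).sum := by
  obtain ⟨R, rfl⟩ := Multiset.le_iff_exists_add.1 h
  refine ⟨F.map Prod.snd + R.map Prod.fst, ?_, by simp, ?_⟩
  · rw [both, Multiset.map_add, Multiset.map_add]
    rw [add_comm (F.map Prod.snd)]
    gcongr
    · exact Multiset.le_add_left _ _
    · exact Multiset.le_add_right _ _
  · rw [sum_diffs]; simp; abel

theorem cover (A0 : Finset G) (Z2 : Multiset G) (P1 : Multiset (G × G)) (hP : both P1 ≤ Z2)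
    (hs : ∀ x, x ∈ sums A0 (diffs P1)) {r : ℕ} (h1 : Multiset.card P1 ≤ r)
    (h2 : r + Multiset.card P1 ≤ Multiset.card Z2) (τ : G) :
    ∃ δ ∈ A0, ∃ T ≤ Z2, Multiset.card T = r ∧ T.sum + δ = τ := by
  obtain ⟨R, rfl⟩ := Multiset.le_iff_exists_add.1 hP
  rw [Multiset.card_add, card_both] at h2
  obtain ⟨F, hF, hFc⟩ := exists_le_card R (r := r - Multiset.card P1) (by omega)
  obtain ⟨a, ha, D, hD, he⟩ := mem_sums.1 (hs (τ - F.sum - (P1.map Prod.fst).sum))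
  obtain ⟨D', hD', rfl⟩ := lift_le _ _ _ hD
  obtain ⟨U, hU, hUc, hUs⟩ := pair_sel P1 D' hD'
  refine ⟨a, ha, U + F, add_le_add hU hF, by simp; omega, ?_⟩
  rw [Multiset.sum_add, hUs, diffs]
  rw [eq_sub_iff_add_eq, eq_sub_iff_add_eq] at he
  rw [← he]; abel

end Sel

section EGZ

variable {C : Type*} [AddCommGroup C]

theorem egz_cyc (hc : IsAddCyclic C) (s : Multiset C) (hs : 2 * Nat.card C - 1 ≤ Multiset.card s) :
    ∃ t ≤ s, Multiset.card t = Nat.card C ∧ t.sum = 0 := by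
  let e := zmodAddCyclicAddEquiv hc
  obtain ⟨t, ht, h1, h2⟩ := ZMod.erdos_ginzburg_ziv_multiset (n := Nat.card C) (s.map e.symm)
    (by simpa using hs)
  obtain ⟨t', ht', rfl⟩ := lift_le _ _ _ ht
  refine ⟨t', ht', by simpa using h1, ?_⟩
  have : e.symm t'.sum = 0 := by
    rw [← h2]; exact map_multiset_sum e.symm t'
  simpa using this

theorem egz_cyc_mul [Finite C] (hc : IsAddCyclic C) (j : ℕ) (s : Multiset C)
    (hs : j * Nat.card C + Nat.card C - 1 ≤ Multiset.card s) :
    ∃ t ≤ s, Multiset.card t = j * Nat.card C ∧ t.sum = 0 := by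
  have hpos : 0 < Nat.card C := Nat.card_pos
  induction j generalizing s with
  | zero => exact ⟨0, Multiset.zero_le _, by simp, by simp⟩
  | succ j ih =>
    have e : (j + 1) * Nat.card C = j * Nat.card C + Nat.card C := by ring
    rw [e] at hs
    have : 0 ≤ j * Nat.card C := Nat.zero_le _
    obtain ⟨t, ht, h1, h2⟩ := egz_cyc hc s (by omega)
    obtain ⟨R, rfl⟩ := Multiset.le_iff_exists_add.1 ht
    rw [Multiset.card_add] at hs
    obtain ⟨t', ht', h1', h2'⟩ := ih R (by omega)
    exact ⟨t + t', add_le_add le_rfl ht', by rw [Multiset.card_add, h1, h1', e, add_comm], by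
      rw [Multiset.sum_add, h2, h2', add_zero]⟩

theorem egz_sub [Finite C] [hc : IsAddCyclic C] (Q : AddSubgroup C) (j : ℕ) (s : Multiset C)
    (hQ : ∀ x ∈ s, x ∈ Q) (hs : j * Nat.card Q + Nat.card Q - 1 ≤ Multiset.card s) :
    ∃ t ≤ s, Multiset.card t = j * Nat.card Q ∧ t.sum = 0 := by
  lift s to Multiset Q using hQ
  obtain ⟨t, ht, h1, h2⟩ := egz_cyc_mul (C := Q) inferInstance j s (by simpa using hs)
  refine ⟨t.map (↑), Multiset.map_le_map ht, by simpa using h1, ?_⟩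
  have := map_multiset_sum Q.subtype t
  rw [h2] at this
  simpa using this.symm

/-- no zero-sum sub-multiset of length `2 |C|` -/
def NoWin (Z : Multiset C) : Prop := ∀ T ≤ Z, Multiset.card T = 2 * Nat.card C → T.sum ≠ 0

/-- the star property -/
def Star (Z : Multiset C) : Prop := ∀ Q : AddSubgroup C, Q ≠ ⊥ → Q ≠ ⊤ → ∀ c : C,
  Nat.card C ≤ Nat.card Q * (Multiset.card (Z.filter fun z => z - c ∉ Q) + 1)

theorem sub_card [Finite C] {Q : AddSubgroup C} (h : Q ≠ ⊥) (h' : Q ≠ ⊤) :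
    ∃ i, 2 ≤ i ∧ 2 ≤ Nat.card Q ∧ Nat.card C = Nat.card Q * i := by
  obtain ⟨i, hi⟩ := AddSubgroup.card_addSubgroup_dvd_card Q
  have h2 : Nat.card Q ≠ 1 := fun h2 => h (AddSubgroup.eq_bot_of_card_eq Q h2)
  have hpos : 0 < Nat.card Q := Nat.card_pos
  have hposC : 0 < Nat.card C := Nat.card_pos
  refine ⟨i, ?_, by omega, hi⟩
  by_contra hlt
  have : i = 0 ∨ i = 1 := by omega
  rcases this with rfl | rfl
  · omega
  · exact h' (AddSubgroup.eq_top_of_card_eq Q (by omega))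

theorem arith1 {q i : ℕ} (hq : 2 ≤ q) (hi : 2 ≤ i) : 2 * (q + i) ≤ q * i + 4 := by
  obtain ⟨a, rfl⟩ := Nat.exists_eq_add_of_le hq
  obtain ⟨b, rfl⟩ := Nat.exists_eq_add_of_le hi
  nlinarith [Nat.zero_le (a * b)]

theorem star_of_noWin [Finite C] [IsAddCyclic C] {Z : Multiset C} {l : ℕ} (hZ : NoWin Z)
    (hl : Multiset.card Z = 2 * Nat.card C + l) (hl2 : Nat.card C + 2 ≤ 2 * l) : Star Z := by
  intro Q hb ht c
  obtain ⟨i, hi2, hq2, hi⟩ := sub_card hb ht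
  by_contra! hlt
  rw [hi] at hlt
  have h1 := lt_of_mul_lt_mul_left hlt (Nat.zero_le _)
  have h2 := arith1 hq2 hi2
  have hsplit := congrArg Multiset.card (Multiset.filter_add_not (fun z => z - c ∉ Q) Z)
  rw [Multiset.card_add] at hsplit
  have e : 2 * i * Nat.card Q = 2 * Nat.card C := by rw [hi]; ring
  obtain ⟨t, ht, hc, hs⟩ := egz_sub Q (2 * i)
    ((Z.filter fun z => ¬ (z - c ∉ Q)).map fun z => z - c) (by
      intro x hx
      obtain ⟨z, hz, rfl⟩ := Multiset.mem_map.1 hx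
      exact not_not.1 (Multiset.mem_filter.1 hz).2) (by
      rw [Multiset.card_map, e]; omega)
  obtain ⟨t', ht', rfl⟩ := lift_le _ _ _ ht
  rw [Multiset.card_map, e] at hc
  refine hZ t' (ht'.trans (Multiset.filter_le _ _)) hc ?_
  rw [Multiset.sum_map_sub, Multiset.map_const', Multiset.sum_replicate, hc, mul_nsmul,
    smul_comm] at hs
  simpa using hs

theorem star_use [Fintype C] {Z : Multiset C} (h : Star Z) (A0 : Finset C) (hA : A0.Nonempty)
    (E : Multiset C) (c : C) (hE : ∀ Q : AddSubgroup C, stab (sums A0 E) = Q →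
      Multiset.card (Z.filter fun z => z - c ∉ Q) ≤ Multiset.card (E.filter (· ∉ Q)))
    (hb : stab (sums A0 E) ≠ ⊥) : sums A0 E = Finset.univ := by
  by_contra hne
  have h1 := K' A0 E hA _ rfl hne
  have ht : stab (sums A0 E) ≠ ⊤ := by
    intro ht
    apply hne
    obtain ⟨a, ha⟩ := sums_nonempty hA E
    ext x
    simp only [Finset.mem_univ, iff_true]
    have : x - a ∈ stab (sums A0 E) := by rw [ht]; trivial
    simpa using vadd_mem_of_stab this ha
  have h2 := h _ hb ht c
  have h3 := hE _ rfl
  have hpos : 0 < Nat.card (stab (sums A0 E)) := Nat.card_pos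
  have := h1.trans h2
  have := le_of_mul_le_mul_left this hpos
  omega

end EGZ

end Dav

end Part2

section Part3

open scoped Classical Pointwise

namespace Dav

section ClaimR

variable {C : Type*} [AddCommGroup C]

theorem mem_stab_of_sub {A : Finset C} {e : C} (h : ∀ a ∈ A, e + a ∈ A) : e ∈ stab A := by
  rw [mem_stab]
  apply Finset.eq_of_subset_of_card_le
  · intro x hx
    obtain ⟨a, ha, rfl⟩ := Finset.mem_vadd_finset.1 hx
    exact h a ha
  · rw [Finset.card_vadd_finset]

theorem mem_vadd_iff {A : Finset C} {r x : C} : x ∈ r +ᵥ A ↔ x - r ∈ A := by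
  rw [Finset.mem_vadd_finset]
  constructor
  · rintro ⟨a, ha, rfl⟩; simpa using ha
  · intro h; exact ⟨x - r, h, by simp⟩

theorem typeI {A B : Finset C} (hst : stab A = ⊥) {r0 r1 r2 a0 a1 a2 : C}
    (h01 : r0 ≠ r1) (h02 : r0 ≠ r2) (h12 : r1 ≠ r2)
    (m0 : a0 ∈ A) (m1 : a1 ∈ A) (m2 : a2 ∈ A)
    (H0 : ∀ x, x ∈ B ↔ x - r0 ∈ A ∧ x - r0 ≠ a0)
    (H1 : ∀ x, x ∈ B ↔ x - r1 ∈ A ∧ x - r1 ≠ a1)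
    (H2 : ∀ x, x ∈ B ↔ x - r2 ∈ A ∧ x - r2 ≠ a2) : r1 - r0 ∈ stab B := by
  have hz : ∀ e, e ∈ stab A → e = 0 := by
    intro e he; rw [hst] at he; exact AddSubgroup.mem_bot.1 he
  have key : ∀ {r r' a a' : C}, (∀ x, x ∈ B ↔ x - r ∈ A ∧ x - r ≠ a) →
      (∀ x, x ∈ B ↔ x - r' ∈ A ∧ x - r' ≠ a') → a = a' → r' - r ∈ stab B := by
    intro r r' a a' h h' haa
    apply mem_stab_of_sub
    intro x hx
    rw [h', ← haa]
    rw [h] at hx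
    have e : r' - r + x - r' = x - r := by abel
    rwa [e]
  by_cases h : a0 = a1
  · exact key H0 H1 h
  exfalso
  have noper : ∀ e, e ∈ stab B → e = 0 := by
    intro e he
    apply hz
    apply mem_stab_of_sub
    intro a ha
    by_cases h0 : a = a0
    · have : a + r1 ∈ B := by
        rw [H1]; simp only [add_sub_cancel_right]; exact ⟨ha, by rw [h0]; exact h⟩
      have := vadd_mem_of_stab he this
      rw [H1, ← add_assoc, add_sub_cancel_right] at this
      exact this.1
    · have : a + r0 ∈ B := by
        rw [H0]; simp only [add_sub_cancel_right]; exact ⟨ha, h0⟩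
      have := vadd_mem_of_stab he this
      rw [H0, ← add_assoc, add_sub_cancel_right] at this
      exact this.1
  have h02' : a0 ≠ a2 := fun hh => h02 (sub_eq_zero.1 (noper _ (key H0 H2 hh))).symm
  have h12' : a1 ≠ a2 := fun hh => h12 (sub_eq_zero.1 (noper _ (key H1 H2 hh))).symm
  have step : ∀ x, x - r1 + r0 ∈ B → x - r2 + r0 ∉ B → x - r1 - r2 + r0 = a1 := by
    intro x h1 h2
    rw [H2] at h1
    rw [H1] at h2
    have e1 : x - r1 + r0 - r2 = x - r1 - r2 + r0 := by abel
    have e2 : x - r2 + r0 - r1 = x - r1 - r2 + r0 := by abel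
    rw [e1] at h1
    rw [e2] at h2
    by_contra hne
    exact h2 ⟨h1.1, hne⟩
  have b1 : a1 + r1 ∉ B := by rw [H1]; simp
  have b2 : a0 + r2 ∈ B := by rw [H2]; simpa using ⟨m0, h02'⟩
  have s1 := step (a1 + r1) (by
    rw [add_sub_cancel_right, H0, add_sub_cancel_right]; exact ⟨m1, Ne.symm h⟩) (by
    rw [H0, add_sub_cancel_right]
    rintro ⟨hA, -⟩
    by_cases hh : a1 + r1 - r2 = a2
    · apply h12
      rw [← sub_eq_zero]
      apply hz
      apply mem_stab_of_sub
      intro a ha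
      by_cases haa : a = a1
      · rw [haa]; rw [show r1 - r2 + a1 = a1 + r1 - r2 by abel]; exact hA
      · have : a + r1 ∈ B := by rw [H1]; simpa using ⟨ha, haa⟩
        rw [H2] at this
        rw [show r1 - r2 + a = a + r1 - r2 by abel]; exact this.1
    · exact b1 ((H2 _).2 ⟨hA, hh⟩))
  have s2 := step (a0 + r2) (by
    rw [H0, add_sub_cancel_right]
    refine ⟨((H1 _).1 b2).1, ?_⟩
    intro hh
    apply h12
    have : a0 + r2 = a0 + r1 := sub_eq_iff_eq_add.1 hh
    exact (add_left_cancel this).symm) (by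
    rw [add_sub_cancel_right, H0]; simp)
  apply b1
  have : a1 + r1 = a0 + r2 := by
    exact sub_left_injective (sub_left_injective (add_right_cancel (s1.trans s2.symm)))
  rw [this]; exact b2

theorem claimR_I [Fintype C] {A B : Finset C} (hst : stab A = ⊥) (hB : B.Nonempty)
    (hc : B.card + 1 = A.card)
    (R : Finset C) (hR : 3 ≤ R.card) (h : ∀ r ∈ R, B ⊆ r +ᵥ A) :
    stab B ≠ ⊤ ∧ ∀ r ∈ R, ∀ r' ∈ R, r - r' ∈ stab B := by
  have hex : ∀ r ∈ R, ∃ a ∈ A, ∀ x, x ∈ B ↔ x - r ∈ A ∧ x - r ≠ a := by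
    intro r hr
    have h1 : ((r +ᵥ A) \ B).card = 1 := by
      rw [Finset.card_sdiff_of_subset (h r hr), Finset.card_vadd_finset]; omega
    obtain ⟨b, hb⟩ := Finset.card_eq_one.1 h1
    have hb' : b ∈ (r +ᵥ A) \ B := by rw [hb]; simp
    rw [Finset.mem_sdiff, mem_vadd_iff] at hb'
    refine ⟨b - r, hb'.1, fun x => ?_⟩
    constructor
    · intro hx
      refine ⟨mem_vadd_iff.1 (h r hr hx), ?_⟩
      intro hh
      apply hb'.2
      rw [← sub_left_injective hh]; exact hx
    · rintro ⟨h1, h2⟩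
      by_contra hx
      have : x ∈ (r +ᵥ A) \ B := Finset.mem_sdiff.2 ⟨mem_vadd_iff.2 h1, hx⟩
      rw [hb, Finset.mem_singleton] at this
      exact h2 (by rw [this])
  refine ⟨?_, ?_⟩
  · intro ht
    obtain ⟨b, hb⟩ := hB
    have : A ⊆ B := by
      intro x _
      have : x - b ∈ stab B := by rw [ht]; trivial
      simpa using vadd_mem_of_stab this hb
    have := Finset.card_le_card this
    omega
  · intro r hr r' hr'
    by_cases hrr : r = r'
    · rw [hrr, sub_self]; exact zero_mem _
    obtain ⟨r2, hr2, hn⟩ := Finset.exists_mem_notMem_of_card_lt_card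
      (lt_of_le_of_lt (Finset.card_le_two (a := r) (b := r')) hR)
    simp only [Finset.mem_insert, Finset.mem_singleton, not_or] at hn
    obtain ⟨a, ha, H⟩ := hex r hr
    obtain ⟨a', ha', H'⟩ := hex r' hr'
    obtain ⟨a2, ha2, H2⟩ := hex r2 hr2
    exact typeI hst (Ne.symm hrr) (Ne.symm hn.2) (Ne.symm hn.1) ha' ha ha2 H' H H2

theorem stab_compl [Fintype C] (A : Finset C) : stab Aᶜ = stab A := by
  have key : ∀ A : Finset C, stab Aᶜ ≤ stab A := by
    intro A e he
    have he' := neg_mem he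
    apply mem_stab_of_sub
    intro a ha
    by_contra hh
    rw [← Finset.mem_compl] at hh
    have := vadd_mem_of_stab he' hh
    rw [neg_add_cancel_left, Finset.mem_compl] at this
    exact this ha
  apply le_antisymm (key A)
  have := key Aᶜ
  rwa [compl_compl] at this

theorem claimR' [Fintype C] {A : Finset C} (hst : stab A = ⊥) (hA2 : 2 ≤ A.card)
    (hAn : A.card + 2 ≤ Fintype.card C)
    (R : Finset C) (hR : 3 ≤ R.card)
    (h : ∀ r ∈ R, ∀ r' ∈ R, ((r +ᵥ A) \ (r' +ᵥ A)).card ≤ 1)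
    {r0 r1 : C} (hr0 : r0 ∈ R) (hr1 : r1 ∈ R) (h01 : r0 ≠ r1) :
    (stab ((r0 +ᵥ A) ∩ (r1 +ᵥ A)) ≠ ⊤ ∧
      ∀ r ∈ R, ∀ r' ∈ R, r - r' ∈ stab ((r0 +ᵥ A) ∩ (r1 +ᵥ A))) ∨
    (stab ((r0 +ᵥ A) ∪ (r1 +ᵥ A)) ≠ ⊤ ∧
      ∀ r ∈ R, ∀ r' ∈ R, r - r' ∈ stab ((r0 +ᵥ A) ∪ (r1 +ᵥ A))) := by
  have one : ∀ {r r' x y : C}, r ∈ R → r' ∈ R → x ∈ r +ᵥ A → x ∉ r' +ᵥ A → y ∈ r +ᵥ A →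
      y ∉ r' +ᵥ A → x = y := by
    intro r r' x y hr hr' hx hx' hy hy'
    exact Finset.card_le_one.1 (h r hr r' hr') x (Finset.mem_sdiff.2 ⟨hx, hx'⟩) y
      (Finset.mem_sdiff.2 ⟨hy, hy'⟩)
  have hne : ∀ {r r' : C}, r ≠ r' → ∃ x, x ∈ r +ᵥ A ∧ x ∉ r' +ᵥ A := by
    intro r r' hrr
    by_contra! hh
    apply hrr
    rw [← sub_eq_zero]
    have : r - r' ∈ stab A := by
      apply mem_stab_of_sub
      intro a ha
      have := hh (a + r) (mem_vadd_iff.2 (by simpa using ha))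
      rw [mem_vadd_iff] at this
      rwa [show r - r' + a = a + r - r' by abel]
    rw [hst] at this
    exact AddSubgroup.mem_bot.1 this
  obtain ⟨p, hp0, hp1⟩ := hne h01
  obtain ⟨q, hq1, hq0⟩ := hne (Ne.symm h01)
  have hd : ((r0 +ᵥ A) \ (r1 +ᵥ A)).card = 1 := by
    apply le_antisymm (h r0 hr0 r1 hr1)
    exact Finset.card_pos.2 ⟨p, Finset.mem_sdiff.2 ⟨hp0, hp1⟩⟩
  have hi := Finset.card_sdiff_add_card_inter (r0 +ᵥ A) (r1 +ᵥ A)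
  have hu := Finset.card_union_add_card_inter (r0 +ᵥ A) (r1 +ᵥ A)
  rw [Finset.card_vadd_finset] at hi
  rw [Finset.card_vadd_finset, Finset.card_vadd_finset] at hu
  by_cases hI : ∀ r ∈ R, (r0 +ᵥ A) ∩ (r1 +ᵥ A) ⊆ r +ᵥ A
  · left; exact claimR_I hst (Finset.card_pos.1 (by omega)) (by omega) R hR hI
  by_cases hII : ∀ r ∈ R, r +ᵥ A ⊆ (r0 +ᵥ A) ∪ (r1 +ᵥ A)
  · have hst' : stab Aᶜ = ⊥ := by rw [stab_compl, hst]
    right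
    rw [← stab_compl]
    refine claimR_I hst' (B := ((r0 +ᵥ A) ∪ (r1 +ᵥ A))ᶜ) (Finset.card_pos.1 ?_) ?_ R hR ?_
    · rw [Finset.card_compl]; omega
    · rw [Finset.card_compl, Finset.card_compl]; omega
    · intro r hr x hx
      rw [Finset.mem_compl] at hx
      rw [mem_vadd_iff, Finset.mem_compl, ← mem_vadd_iff]
      exact fun hh => hx (hII r hr hh)
  · exfalso
    push Not at hI hII
    obtain ⟨r3, hr3, h3⟩ := hI
    obtain ⟨r2, hr2, h2⟩ := hII
    obtain ⟨z, hz, hz3⟩ := Finset.not_subset.1 h3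
    obtain ⟨y, hy2, hy⟩ := Finset.not_subset.1 h2
    rw [Finset.mem_inter] at hz
    rw [Finset.mem_union, not_or] at hy
    have p3 : p ∈ r3 +ᵥ A := by
      by_contra hh
      have := one hr0 hr3 hp0 hh hz.1 hz3
      exact hp1 (this ▸ hz.2)
    have q3 : q ∈ r3 +ᵥ A := by
      by_contra hh
      have := one hr1 hr3 hq1 hh hz.2 hz3
      exact hq0 (this ▸ hz.1)
    have p2 : p ∉ r2 +ᵥ A := by
      intro hh
      have := one hr2 hr1 hh hp1 hy2 hy.2
      exact hy.1 (this ▸ hp0)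
    have q2 : q ∉ r2 +ᵥ A := by
      intro hh
      have := one hr2 hr0 hh hq0 hy2 hy.1
      exact hy.2 (this ▸ hq1)
    have := one hr3 hr2 p3 p2 q3 q2
    exact hq0 (this ▸ hp0)

theorem claimR [Fintype C] {A : Finset C} (hst : stab A = ⊥) (hA2 : 2 ≤ A.card)
    (hAn : A.card + 2 ≤ Fintype.card C)
    (R : Finset C) (hR : 3 ≤ R.card)
    (h : ∀ r ∈ R, ∀ r' ∈ R, ((r +ᵥ A) \ (r' +ᵥ A)).card ≤ 1) :
    ∃ Q : AddSubgroup C, Q ≠ ⊤ ∧ ∀ r ∈ R, ∀ r' ∈ R, r - r' ∈ Q := by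
  obtain ⟨r0, hr0, r1, hr1, h01⟩ := Finset.one_lt_card.1 (by omega : 1 < R.card)
  rcases claimR' hst hA2 hAn R hR h hr0 hr1 h01 with h | h
  · exact ⟨_, h⟩
  · exact ⟨_, h⟩

/-- closeness -/
def cl (A : Finset C) (d : C) : Prop := ((d +ᵥ A) \ A).card ≤ 1

theorem near_iff {A : Finset C} {r r' : C} :
    ((r +ᵥ A) \ (r' +ᵥ A)).card = (((r - r') +ᵥ A) \ A).card := by
  have : (r +ᵥ A) \ (r' +ᵥ A) = r' +ᵥ (((r - r') +ᵥ A) \ A) := by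
    rw [Finset.vadd_finset_sdiff, vadd_vadd]; simp
  rw [this, Finset.card_vadd_finset]

theorem cl_neg {A : Finset C} {d : C} (h : cl A d) : cl A (-d) := by
  unfold cl at *
  have h1 := near_iff (A := A) (r := 0) (r' := d)
  rw [zero_vadd, zero_sub] at h1
  rw [← h1, Finset.card_sdiff_comm (by rw [Finset.card_vadd_finset])]
  exact h

theorem cl_zero (A : Finset C) : cl A 0 := by simp [cl]

theorem cl_of_growth {A : Finset C} {d : C} (h : (A ∪ (d +ᵥ A)).card ≤ A.card + 1) : cl A d := by
  unfold cl
  have := Finset.card_union_add_card_inter A (d +ᵥ A)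
  have h2 := Finset.card_sdiff_add_card_inter (d +ᵥ A) A
  rw [Finset.inter_comm] at h2
  omega

theorem triple [Fintype C] {A : Finset C} (hst : stab A = ⊥) (hA2 : 2 ≤ A.card)
    (hAn : A.card + 2 ≤ Fintype.card C) {x y : C} (hx0 : x ≠ 0) (hy0 : y ≠ 0) (hxy : x ≠ y)
    (hx : cl A x) (hy : cl A y) (hd : cl A (x - y)) :
    (x ∈ stab (A ∩ (x +ᵥ A)) ∧ y ∈ stab (A ∩ (x +ᵥ A))) ∨
    (x ∈ stab (A ∪ (x +ᵥ A)) ∧ y ∈ stab (A ∪ (x +ᵥ A))) := by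
  have hc : ({0, x, y} : Finset C).card = 3 := Finset.card_eq_three.2
    ⟨0, x, y, hx0.symm, hy0.symm, hxy, rfl⟩
  have h := claimR' hst hA2 hAn {0, x, y} hc.ge (by
    intro r hr r' hr'
    rw [near_iff]
    simp only [Finset.mem_insert, Finset.mem_singleton] at hr hr'
    change cl A (r - r')
    rcases hr with rfl | rfl | rfl <;> rcases hr' with rfl | rfl | rfl
    · simpa using cl_zero A
    · simpa using cl_neg hx
    · simpa using cl_neg hy
    · simpa using hx
    · simpa using cl_zero A
    · exact hd
    · simpa using hy
    · have := cl_neg hd; rwa [neg_sub] at this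
    · simpa using cl_zero A) (r0 := 0) (r1 := x) (by simp) (by simp) hx0.symm
  rw [zero_vadd] at h
  rcases h with ⟨-, h⟩ | ⟨-, h⟩
  · left
    exact ⟨by simpa using h x (by simp) 0 (by simp), by simpa using h y (by simp) 0 (by simp)⟩
  · right
    exact ⟨by simpa using h x (by simp) 0 (by simp), by simpa using h y (by simp) 0 (by simp)⟩

theorem stab_vadd_eq (A : Finset C) (x : C) : stab (x +ᵥ A) = stab A := by
  apply le_antisymm
  · have := stab_vadd (le_refl (stab (x +ᵥ A))) (-x)
    rwa [neg_vadd_vadd] at this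
  · exact stab_vadd le_rfl x

/-- every close `y` is close to `x` or to `-x` -/
theorem close_pm {A : Finset C} {x y : C} (hy0 : y ≠ 0)
    (hx : cl A x) (hxs : x ∉ stab A) (hy : cl A y) : cl A (x - y) ∨ cl A (-x - y) := by
  have hx' := cl_neg hx
  have hy' := cl_neg hy
  obtain ⟨p, hp, hpx⟩ : ∃ p ∈ A, p - x ∉ A := by
    by_contra! hh
    apply hxs
    have : -x ∈ stab A := mem_stab_of_sub fun a ha => by
      rw [neg_add_eq_sub]; exact hh a ha
    simpa using neg_mem this
  have up : ∀ b ∈ A, b - x ∉ A → b = p := by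
    intro b hb hbx
    have := Finset.card_le_one.1 hx' (b - x) (by
      rw [Finset.mem_sdiff, mem_vadd_iff]; simpa using ⟨hb, hbx⟩) (p - x) (by
      rw [Finset.mem_sdiff, mem_vadd_iff]; simpa using ⟨hp, hpx⟩)
    exact sub_left_injective this
  have hb : p - y ∉ A ∨ p - x - y ∈ A := by
    by_contra! hh
    have := up (p - y) hh.1 (by rw [show p - y - x = p - x - y by abel]; exact hh.2)
    apply hy0
    simpa using this
  rcases hb with hb | hb
  · left
    have h1 : ∀ z ∈ A, z ≠ p → z - y ∈ A := by
      intro z hz hzp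
      by_contra hh
      have := Finset.card_le_one.1 hy' (z - y) (by
        rw [Finset.mem_sdiff, mem_vadd_iff]; simpa using ⟨hz, hh⟩) (p - y) (by
        rw [Finset.mem_sdiff, mem_vadd_iff]; simpa using ⟨hp, hb⟩)
      exact hzp (sub_left_injective this)
    unfold cl
    rw [← near_iff, Finset.card_le_one]
    have key : ∀ z ∈ (x +ᵥ A) \ (y +ᵥ A), z ∈ (x +ᵥ A) \ A := by
      intro z hz
      rw [Finset.mem_sdiff, mem_vadd_iff, mem_vadd_iff] at hz
      rw [Finset.mem_sdiff, mem_vadd_iff]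
      refine ⟨hz.1, fun hzA => ?_⟩
      by_cases hzp : z = p
      · exact hpx (hzp ▸ hz.1)
      · exact hz.2 (h1 z hzA hzp)
    intro a ha b hb
    exact Finset.card_le_one.1 hx a (key a ha) b (key b hb)
  · right
    have h1 : ∀ z, z + x ∈ A → z ∉ A → z = p - x := by
      intro z hz hzA
      have := up (z + x) hz (by simpa using hzA)
      rw [← this]; simp
    unfold cl
    rw [← near_iff, Finset.card_le_one]
    have key : ∀ z ∈ (-x +ᵥ A) \ (y +ᵥ A), z + -y ∈ (-y +ᵥ A) \ A := by
      intro z hz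
      rw [Finset.mem_sdiff, mem_vadd_iff, mem_vadd_iff, sub_neg_eq_add] at hz
      rw [Finset.mem_sdiff, mem_vadd_iff]
      simp only [sub_neg_eq_add, neg_add_cancel_right]
      refine ⟨?_, by simpa [← sub_eq_add_neg] using hz.2⟩
      by_contra hzA
      have := h1 z hz.1 hzA
      rw [this] at hz
      exact hz.2 hb
    intro a ha b hb
    exact add_right_cancel (Finset.card_le_one.1 hy' _ (key a ha) _ (key b hb))

theorem claimRR [Fintype C] {A : Finset C} (hst : stab A = ⊥) (hA2 : 2 ≤ A.card)
    (hAn : A.card + 2 ≤ Fintype.card C) (R : Set C) (hR : ∀ x ∈ R, cl A x) {x : C} (hxR : x ∈ R)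
    (hx0 : x ≠ 0) :
    (∀ y ∈ R, y = 0 ∨ y = x ∨ y = -x) ∨
      ∃ Q : AddSubgroup C, Q ≠ ⊤ ∧ ∀ y ∈ R, y ∈ Q := by
  have hxs : x ∉ stab A := by rw [hst]; simpa using hx0
  have hd1 : ((x +ᵥ A) \ A).card = 1 := by
    apply le_antisymm (hR x hxR)
    have := growth_step (A := A) (Q := ⊥) bot_le hxs
    rw [Nat.card_unique] at this
    have h2 := Finset.card_sdiff_add_card (x +ᵥ A) A
    rw [Finset.union_comm] at h2
    omega
  have hi := Finset.card_sdiff_add_card_inter (x +ᵥ A) A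
  have hu := Finset.card_sdiff_add_card (x +ᵥ A) A
  rw [Finset.card_vadd_finset, Finset.inter_comm] at hi
  rw [Finset.union_comm] at hu
  set B := A ∩ (x +ᵥ A) with hB
  set U := A ∪ (x +ᵥ A) with hU
  have hBt : stab B ≠ ⊤ := by
    intro ht
    obtain ⟨b, hb⟩ := Finset.card_pos.1 (by omega : 0 < B.card)
    have : A ⊆ B := by
      intro z _
      have : z - b ∈ stab B := by rw [ht]; trivial
      simpa using vadd_mem_of_stab this hb
    have := Finset.card_le_card this
    omega
  have hUt : stab U ≠ ⊤ := by
    intro ht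
    obtain ⟨b, hb⟩ := Finset.card_pos.1 (by omega : 0 < U.card)
    have : Finset.univ ⊆ U := by
      intro z _
      have : z - b ∈ stab U := by rw [ht]; trivial
      simpa using vadd_mem_of_stab this hb
    have := Finset.card_le_card this
    rw [Finset.card_univ] at this
    omega
  have alt : ∀ y ∈ R, (y = 0 ∨ y = x ∨ y = -x) ∨ (x ∈ stab B ∧ y ∈ stab B) ∨
      (x ∈ stab U ∧ y ∈ stab U) := by
    intro y hy
    by_cases h : y = 0 ∨ y = x ∨ y = -x
    · exact Or.inl h
    right
    push Not at h
    rcases close_pm h.1 (hR x hxR) hxs (hR y hy) with hc | hc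
    · exact triple hst hA2 hAn hx0 h.1 (Ne.symm h.2.1) (hR x hxR) (hR y hy) hc
    · have := triple hst hA2 hAn (neg_ne_zero.2 hx0) h.1 (Ne.symm h.2.2) (cl_neg (hR x hxR))
        (hR y hy) hc
      have e1 : A ∩ (-x +ᵥ A) = -x +ᵥ B := by
        rw [hB, Finset.vadd_finset_inter, neg_vadd_vadd, Finset.inter_comm]
      have e2 : A ∪ (-x +ᵥ A) = -x +ᵥ U := by
        rw [hU, Finset.vadd_finset_union, neg_vadd_vadd, Finset.union_comm]
      rw [e1, e2, stab_vadd_eq, stab_vadd_eq] at this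
      simpa only [neg_mem_iff] using this
  by_cases h0 : ∀ y ∈ R, y = 0 ∨ y = x ∨ y = -x
  · exact Or.inl h0
  right
  by_cases hI : ∀ y ∈ R, y ∈ stab B
  · exact ⟨_, hBt, hI⟩
  by_cases hII : ∀ y ∈ R, y ∈ stab U
  · exact ⟨_, hUt, hII⟩
  exfalso
  push Not at hI hII h0
  obtain ⟨y, hy, hyB⟩ := hI
  obtain ⟨z, hz, hzU⟩ := hII
  obtain ⟨w, hw, hw0⟩ := h0
  have triv : ∀ {y} {K : AddSubgroup C}, x ∈ K → (y = 0 ∨ y = x ∨ y = -x) → y ∈ K := by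
    rintro y K hK (rfl | rfl | rfl)
    · exact zero_mem _
    · exact hK
    · exact neg_mem hK
  have hxor : x ∈ stab B ∨ x ∈ stab U := by
    rcases alt w hw with h | h | h
    · exact absurd h (by push Not; exact hw0)
    · exact Or.inl h.1
    · exact Or.inr h.1
  have hxU : x ∈ stab U := by
    rcases hxor with h | h
    · rcases alt y hy with h' | h' | h'
      · exact absurd (triv h h') hyB
      · exact absurd h'.2 hyB
      · exact h'.1
    · exact h
  have hxB : x ∈ stab B := by
    rcases alt z hz with h' | h' | h'
    · exact absurd (triv hxU h') hzU
    · exact h'.1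
    · exact absurd h'.2 hzU
  have hyU : y ∈ stab U := by
    rcases alt y hy with h' | h' | h'
    · exact triv hxU h'
    · exact absurd h'.2 hyB
    · exact h'.2
  have hg := growth_step (A := U) (Q := stab U) le_rfl hzU
  have hbd : (U ∪ (z +ᵥ U)).card ≤ U.card + 2 := by
    have hs : U ∪ (z +ᵥ U) ⊆ U ∪ (((z +ᵥ A) \ A) ∪ (z +ᵥ ((x +ᵥ A) \ A))) := by
      intro v hv
      by_cases hvU : v ∈ U
      · exact Finset.mem_union_left _ hvU
      · rcases Finset.mem_union.1 hv with h | h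
        · exact absurd h hvU
        · have hvA : v ∉ A := fun h => hvU (Finset.mem_union_left _ h)
          rw [mem_vadd_iff] at h
          simp only [Finset.mem_union, Finset.mem_sdiff, mem_vadd_iff]
          right
          by_cases hh : v - z ∈ A
          · exact Or.inl ⟨hh, hvA⟩
          · right
            rcases Finset.mem_union.1 h with h | h
            · exact absurd h hh
            · exact ⟨mem_vadd_iff.1 h, hh⟩
    have h1 := Finset.card_le_card hs
    have h2 := Finset.card_union_le U (((z +ᵥ A) \ A) ∪ (z +ᵥ ((x +ᵥ A) \ A)))
    have h3 := Finset.card_union_le ((z +ᵥ A) \ A) (z +ᵥ ((x +ᵥ A) \ A))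
    rw [Finset.card_vadd_finset] at h3
    have h4 : ((z +ᵥ A) \ A).card ≤ 1 := hR z hz
    omega
  have hle : (sg (stab U)).card ≤ 2 := by rw [card_sg]; omega
  have hsub : ({0, x} : Finset C) = sg (stab U) := by
    apply Finset.eq_of_subset_of_card_le
    · intro v hv
      simp only [Finset.mem_insert, Finset.mem_singleton] at hv
      rcases hv with rfl | rfl
      · exact mem_sg.2 (zero_mem _)
      · exact mem_sg.2 hxU
    · rw [Finset.card_pair hx0.symm]; exact hle
  have : y ∈ ({0, x} : Finset C) := by rw [hsub]; exact mem_sg.2 hyU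
  simp only [Finset.mem_insert, Finset.mem_singleton] at this
  rcases this with rfl | rfl
  · exact hyB (zero_mem _)
  · exact hyB hxB

end ClaimR

end Dav

end Part3

section Part4

open scoped Classical Pointwise

namespace Dav

theorem exists_max {α : Type*} (p : α → Prop) (f : α → ℕ) (b : ℕ) (hne : ∃ a, p a)
    (hb : ∀ a, p a → f a ≤ b) : ∃ a, p a ∧ ∀ a', p a' → f a' ≤ f a := by
  obtain ⟨a, ha, hmin⟩ := WellFounded.has_min (measure fun a => b - f a).wf {a | p a} hne
  refine ⟨a, ha, fun a' ha' => ?_⟩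
  have h1 := hmin a' ha'
  have h2 := hb a ha
  have h3 := hb a' ha'
  change ¬ (b - f a' < b - f a) at h1
  omega

theorem two_le_of_mem {α : Type*} {W : Multiset α} {x y : α} (hx : x ∈ W) (hy : y ∈ W)
    (h : x ≠ y) : ∃ V, W = x ::ₘ y ::ₘ V := by
  obtain ⟨V, rfl⟩ := Multiset.exists_cons_of_mem hx
  rw [Multiset.mem_cons] at hy
  rcases hy with hy | hy
  · exact absurd hy.symm h
  · obtain ⟨V', rfl⟩ := Multiset.exists_cons_of_mem hy
    exact ⟨V', rfl⟩

section

variable {C : Type*} [AddCommGroup C]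

theorem sums_diffs_cons (A0 : Finset C) (P : Multiset (C × C)) (x y : C) :
    sums A0 (diffs ((x, y) ::ₘ P)) =
      sums A0 (diffs P) ∪ ((y - x) +ᵥ sums A0 (diffs P)) := by
  rw [diffs_cons, sums_cons]

theorem maxpair (A0 : Finset C) (W : Multiset C) (g e : ℕ) (h0 : e ≤ A0.card) :
    ∃ (P : Multiset (C × C)) (V : Multiset C), both P + V = W ∧ (∀ p ∈ P, p.1 ≠ p.2) ∧
      e + g * Multiset.card P ≤ (sums A0 (diffs P)).card ∧
      ∀ x ∈ V, ∀ y ∈ V, x ≠ y →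
        (sums A0 (diffs P) ∪ ((y - x) +ᵥ sums A0 (diffs P))).card
          < e + g * (Multiset.card P + 1) := by
  obtain ⟨P, ⟨V, hV, hd, hP⟩, hmax⟩ := exists_max
    (fun P : Multiset (C × C) => ∃ V, both P + V = W ∧ (∀ p ∈ P, p.1 ≠ p.2) ∧
      e + g * Multiset.card P ≤ (sums A0 (diffs P)).card) (fun P => Multiset.card P)
    (Multiset.card W) ⟨0, W, by simp [both], by simp, by simpa [diffs, sums_zero] using h0⟩ (by
      rintro P ⟨V, rfl, -⟩
      rw [Multiset.card_add, card_both]; omega)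
  refine ⟨P, V, hV, hd, hP, fun x hx y hy hxy => ?_⟩
  by_contra! hlt
  obtain ⟨V', rfl⟩ := two_le_of_mem hx hy hxy
  have := hmax ((x, y) ::ₘ P) ⟨V', by
    rw [both_cons, ← hV]; simp only [Multiset.add_cons, Multiset.cons_add], by
    intro p hp
    rcases Multiset.mem_cons.1 hp with rfl | hp
    · exact hxy
    · exact hd p hp, by
    rw [sums_diffs_cons, Multiset.card_cons]; exact hlt⟩
  simp at this

theorem sums_congr_quot {A : Finset C} {Q : AddSubgroup C} (hQ : Q ≤ stab A) {E F : Multiset C}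
    (h : E.map (QuotientAddGroup.mk (s := Q)) = F.map (QuotientAddGroup.mk (s := Q))) :
    sums A E ⊆ sums A F := by
  intro x hx
  obtain ⟨a, ha, D, hD, rfl⟩ := mem_sums.1 hx
  obtain ⟨D', hD', he⟩ := lift_le (QuotientAddGroup.mk (s := Q)) F
    (D.map (QuotientAddGroup.mk (s := Q))) (h ▸ Multiset.map_le_map hD)
  have hm : D.sum - D'.sum ∈ Q := by
    rw [← QuotientAddGroup.eq_zero_iff, QuotientAddGroup.mk_sub, sub_eq_zero]
    have e1 := map_multiset_sum (QuotientAddGroup.mk' Q) D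
    have e2 := map_multiset_sum (QuotientAddGroup.mk' Q) D'
    simp only [QuotientAddGroup.coe_mk'] at e1 e2
    rw [e1, e2, he]
  exact mem_sums.2 ⟨D.sum - D'.sum + a, vadd_mem_of_stab (hQ hm) ha, D', hD', by abel⟩

variable [Fintype C]

theorem win {Z : Multiset C} {l : ℕ} (hZ : NoWin Z)
    (hl : Multiset.card Z = 2 * Nat.card C + l) (hln : l ≤ 2 * Nat.card C)
    {P : Multiset (C × C)} (hP : both P ≤ Z)
    (hs : sums {0} (diffs P) = Finset.univ) (hc : Multiset.card P ≤ l) : False := by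
  obtain ⟨δ, hδ, T, hT, h1, h2⟩ := cover {0} Z P hP (by simp [hs]) (r := 2 * Nat.card C)
    (by omega) (by omega) 0
  rw [Finset.mem_singleton] at hδ
  rw [hδ, add_zero] at h2
  exact hZ T hT h1 h2

theorem zip_exists {α β : Type*} (X : Multiset α) (Y : Multiset β)
    (h : Multiset.card X = Multiset.card Y) :
    ∃ P : Multiset (α × β), P.map Prod.fst = X ∧ P.map Prod.snd = Y := by
  induction X using Multiset.induction_on generalizing Y with
  | empty =>
    refine ⟨0, rfl, ?_⟩
    simp at h
    simp [Multiset.card_eq_zero.1 h.symm]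
  | cons x X ih =>
    rw [Multiset.card_cons] at h
    obtain ⟨y, hy⟩ := Multiset.card_pos_iff_exists_mem.1 (by omega : 0 < Multiset.card Y)
    obtain ⟨Y', rfl⟩ := Multiset.exists_cons_of_mem hy
    obtain ⟨P, h1, h2⟩ := ih Y' (by simpa using h)
    exact ⟨(x, y) ::ₘ P, by simp [h1], by simp [h2]⟩

end

end Dav

end Part4

section Part5

open scoped Classical Pointwise

namespace Dav

section

variable {C : Type*} [AddCommGroup C] [Fintype C]

def Heavy (Z : Multiset C) (l : ℕ) (Q : AddSubgroup C) : Prop :=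
  ∃ c, l + 2 * Nat.card Q ≤ Multiset.card (Z.filter fun z => z - c ∈ Q)

theorem heavy_of_le {Z V : Multiset C} {l : ℕ} {Q : AddSubgroup C} (hV : V ≤ Z) (c : C)
    (h : ∀ z ∈ V, z - c ∈ Q) (hc : l + 2 * Nat.card Q ≤ Multiset.card V) : Heavy Z l Q :=
  ⟨c, hc.trans (Multiset.card_le_card (Multiset.le_filter.2 ⟨hV, h⟩))⟩

theorem stab_ne_top {A : Finset C} (hne : A.Nonempty) (h : A ≠ Finset.univ) : stab A ≠ ⊤ := by
  intro ht
  apply h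
  obtain ⟨a, ha⟩ := hne
  ext x
  simp only [Finset.mem_univ, iff_true]
  have : x - a ∈ stab A := by rw [ht]; trivial
  simpa using vadd_mem_of_stab this ha

theorem stab_le_of_sub {A : Finset C} {Q : AddSubgroup C} (h0 : (0 : C) ∈ A)
    (hA : ∀ a ∈ A, a ∈ Q) : stab A ≤ Q := by
  intro q hq
  have := hA _ (vadd_mem_of_stab hq h0)
  simpa using this

theorem zero_mem_sums (E : Multiset C) : (0 : C) ∈ sums {0} E :=
  subset_sums _ _ (Finset.mem_singleton_self 0)

theorem subset_sg {A : Finset C} {Q : AddSubgroup C} (hA : ∀ a ∈ A, a ∈ Q) : A ⊆ sg Q :=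
  fun a ha => mem_sg.2 (hA a ha)

theorem card_lt_of_ne_top {Q : AddSubgroup C} (h : Q ≠ ⊤) : 2 * Nat.card Q ≤ Nat.card C := by
  by_cases hb : Q = ⊥
  · have : 1 < Nat.card C := by
      by_contra hlt
      apply h
      have hp : 0 < Nat.card C := Nat.card_pos
      apply AddSubgroup.eq_top_of_card_eq
      rw [hb, Nat.card_unique]; omega
    rw [hb, Nat.card_unique]; omega
  · obtain ⟨i, hi, hq, he⟩ := sub_card hb h
    rw [he]; nlinarith

/-- Every sub-multiset outside `Q` gives what `star_use` requires. -/
theorem star_univ {Z : Multiset C} (hst : Star Z) {Q : AddSubgroup C} (hb : Q ≠ ⊥) (c : C) :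
    sums (sg Q) ((Z.filter fun z => z - c ∉ Q).map fun z => z - c) = Finset.univ := by
  have hle : Q ≤ stab (sums (sg Q) ((Z.filter fun z => z - c ∉ Q).map fun z => z - c)) :=
    stab_sums _ _ (le_stab_sg Q)
  refine star_use hst (sg Q) ⟨0, mem_sg.2 Q.zero_mem⟩ _ c ?_ ?_
  · rintro Q' rfl
    set Q' := stab (sums (sg Q) ((Z.filter fun z => z - c ∉ Q).map fun z => z - c))
    rw [Multiset.filter_map, Multiset.card_map, Multiset.filter_filter]
    apply Multiset.card_le_card
    apply Multiset.le_filter.2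
    refine ⟨Multiset.filter_le _ _, ?_⟩
    intro z hz
    have := (Multiset.mem_filter.1 hz).2
    exact ⟨this, fun h => this (hle h)⟩
  · intro h
    rw [h] at hle
    exact hb (le_bot_iff.1 hle)

theorem stepA {Z : Multiset C} {l : ℕ} (hZ : NoWin Z) (hst : Star Z)
    (hl : Multiset.card Z = 2 * Nat.card C + l) (hl1 : l + 2 ≤ Nat.card C)
    (hl2 : Nat.card C + 2 ≤ 2 * l) {Q : AddSubgroup C} (hb : Q ≠ ⊥) (ht : Q ≠ ⊤)
    (hh : Heavy Z l Q) : ∃ Q' < Q, Heavy Z l Q' := by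
  obtain ⟨c, hc⟩ := hh
  obtain ⟨P, V, hV, -, hP, hmax⟩ := maxpair {0} (Z.filter fun z => z - c ∈ Q) 1 1 (by simp)
  set A := sums {0} (diffs P) with hA
  have hmem : ∀ z ∈ both P + V, z - c ∈ Q := by
    intro z hz; rw [hV] at hz; exact (Multiset.mem_filter.1 hz).2
  have hAQ : ∀ a ∈ A, a ∈ Q := by
    apply sums_subset_subgroup
    · intro a ha; rw [Finset.mem_singleton.1 ha]; exact Q.zero_mem
    · intro d hd
      obtain ⟨p, hp, rfl⟩ := Multiset.mem_map.1 hd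
      have h1 := hmem p.1 (Multiset.mem_add.2 (Or.inl (Multiset.mem_add.2
        (Or.inl (Multiset.mem_map_of_mem _ hp)))))
      have h2 := hmem p.2 (Multiset.mem_add.2 (Or.inl (Multiset.mem_add.2
        (Or.inr (Multiset.mem_map_of_mem _ hp)))))
      have := Q.sub_mem h2 h1
      simpa using this
  have hVZ : V ≤ Z := by
    refine le_trans ?_ (Multiset.filter_le (fun z => z - c ∈ Q) Z)
    rw [← hV]; exact Multiset.le_add_left _ _
  have hcard : 2 * Multiset.card P + Multiset.card V
      = Multiset.card (Z.filter fun z => z - c ∈ Q) := by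
    rw [← hV, Multiset.card_add, card_both]
  by_cases hAe : A = sg Q
  · exfalso
    have hPc : Multiset.card P + 1 ≤ Nat.card Q := by
      rw [← card_sg, ← hAe]; omega
    obtain ⟨E', hE', hs, hk⟩ := KL (sg Q) Q (le_stab_sg Q)
      ((Z.filter fun z => z - c ∉ Q).map fun z => z - c)
    rw [star_univ hst hb c] at hs hk
    rw [card_sg, Finset.card_univ, ← Nat.card_eq_fintype_card] at hk
    obtain ⟨i, hi2, hq2, hi⟩ := sub_card hb ht
    have hEi : Multiset.card E' + 1 ≤ i := by
      have : Nat.card Q * (Multiset.card E' + 1) ≤ Nat.card Q * i := by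
        rw [← hi, mul_add]; omega
      exact le_of_mul_le_mul_left this (by omega)
    have har := arith1 hq2 hi2
    rw [← hi] at har
    obtain ⟨X, hX, rfl⟩ := lift_le _ _ _ hE'
    rw [Multiset.card_map] at hEi
    obtain ⟨Y, hY, hYc⟩ := exists_le_card V (r := Multiset.card X) (by omega)
    obtain ⟨P', h1, h2⟩ := zip_exists Y X hYc
    apply win hZ hl (by omega) (P := P + P')
    · rw [both_add, both, both, h1, h2]
      have e := Multiset.filter_add_not (fun z => z - c ∈ Q) Z
      rw [← e, ← hV, ← add_assoc]
      exact add_le_add (add_le_add le_rfl hY) hX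
    · rw [diffs_add, sums_add, ← hA, hAe]
      apply Finset.eq_univ_of_forall
      intro x
      refine sums_congr_quot (le_stab_sg Q) ?_ (by rw [hs]; exact Finset.mem_univ x)
      have h2' : X.map (fun z => z - c) = P'.map fun p => p.2 - c := by
        rw [← h2, Multiset.map_map]; rfl
      rw [h2', diffs, Multiset.map_map, Multiset.map_map]
      apply Multiset.map_congr rfl
      intro p hp
      simp only [Function.comp]
      rw [QuotientAddGroup.eq]
      have : p.1 ∈ V := Multiset.mem_of_le hY (h1 ▸ Multiset.mem_map_of_mem _ hp)
      have := Q.neg_mem (hmem p.1 (Multiset.mem_add.2 (Or.inr this)))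
      rw [show -(p.2 - c) + (p.2 - p.1) = -(p.1 - c) by abel]
      exact this
    · rw [Multiset.card_add]
      have := congrArg Multiset.card h2
      rw [Multiset.card_map] at this
      omega
  · have hle : stab A ≤ Q := stab_le_of_sub (zero_mem_sums _) hAQ
    have hg := per_growth (le_refl (stab A)) (hle.trans (le_stab_sg Q)) (subset_sg hAQ) hAe
    rw [card_sg] at hg
    have hp : 0 < A.card := Finset.card_pos.2 ⟨0, zero_mem_sums _⟩
    refine ⟨stab A, lt_of_le_of_ne hle ?_, ?_⟩
    · intro h; rw [h] at hg; omega
    · obtain ⟨c2, hc2⟩ := Multiset.card_pos_iff_exists_mem.1 (by omega : 0 < Multiset.card V)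
      refine heavy_of_le hVZ c2 ?_ (by omega)
      intro z hz
      by_cases hzc : c2 = z
      · rw [hzc, sub_self]; exact zero_mem _
      have := hmax c2 hc2 z hz hzc
      by_contra hn
      have h3 := growth_step (A := A) (Q := ⊥) bot_le hn
      rw [Nat.card_unique] at h3
      omega

theorem card_two_values {V : Multiset C} (h : V.toFinset.card ≤ 2) :
    ∃ v, Multiset.card V ≤ 2 * V.count v := by
  by_contra! hlt
  have h1 := Multiset.toFinset_sum_count_eq V
  by_cases h0 : V.toFinset = ∅
  · have := Multiset.toFinset_eq_empty.1 h0
    have := hlt 0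
    subst V; simp at this
  have h2 : ∑ a ∈ V.toFinset, 2 * V.count a < ∑ a ∈ V.toFinset, Multiset.card V :=
    Finset.sum_lt_sum_of_nonempty (Finset.nonempty_iff_ne_empty.2 h0) fun a _ => hlt a
  rw [← Finset.mul_sum, h1, Finset.sum_const, smul_eq_mul] at h2
  have := Nat.mul_le_mul_right (Multiset.card V) h
  omega

theorem stab_bot_of_card {A : Finset C} (h : A.card + 1 = Nat.card C) : stab A = ⊥ := by
  have hne : A ≠ Finset.univ := by
    intro he
    rw [he, Finset.card_univ, ← Nat.card_eq_fintype_card] at h; omega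
  have hg := per_growth (B := Finset.univ) (le_refl (stab A))
    (le_stab_of_mem fun q _ a _ => Finset.mem_univ _) (Finset.subset_univ _) hne
  rw [Finset.card_univ, ← Nat.card_eq_fintype_card] at hg
  have hp : 0 < Nat.card (stab A) := Nat.card_pos
  exact AddSubgroup.eq_bot_of_card_eq _ (by omega)

theorem univ_of_card {A : Finset C} (h : Nat.card C ≤ A.card) : A = Finset.univ := by
  apply Finset.eq_univ_of_card
  apply le_antisymm (Finset.card_le_univ A)
  rwa [← Nat.card_eq_fintype_card]

theorem stepB {Z : Multiset C} {l : ℕ} (hZ : NoWin Z)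
    (hl : Multiset.card Z = 2 * Nat.card C + l) (hl1 : l + 2 ≤ Nat.card C)
    (hl2 : Nat.card C + 2 ≤ 2 * l) : ∃ Q : AddSubgroup C, Q ≠ ⊤ ∧ Heavy Z l Q := by
  by_contra! hno
  obtain ⟨P, V, hV, hne, hP, hmax⟩ := maxpair {0} Z 2 0 (by simp)
  set A := sums {0} (diffs P) with hA
  have hAn : A.card ≤ Nat.card C := by
    rw [Nat.card_eq_fintype_card]; exact Finset.card_le_univ A
  have hcard : 2 * Multiset.card P + Multiset.card V = Multiset.card Z := by
    rw [← hV, Multiset.card_add, card_both]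
  have hVZ : V ≤ Z := by rw [← hV]; exact Multiset.le_add_left _ _
  have hPZ : both P ≤ Z := by rw [← hV]; exact Multiset.le_add_right _ _
  obtain ⟨v0, hv0⟩ := Multiset.card_pos_iff_exists_mem.1 (by omega : 0 < Multiset.card V)
  have hcoset : ∀ Q : AddSubgroup C, Q ≠ ⊤ → ¬ ∀ z ∈ V, z - v0 ∈ Q := by
    intro Q hQ hall
    refine hno Q hQ (heavy_of_le hVZ v0 hall ?_)
    have := card_lt_of_ne_top hQ
    omega
  have hbt : (⊥ : AddSubgroup C) ≠ ⊤ := by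
    intro h
    have h1 : Nat.card (⊥ : AddSubgroup C) = Nat.card (⊤ : AddSubgroup C) := by rw [h]
    rw [Nat.card_unique, AddSubgroup.card_top] at h1
    omega
  have hApos : 0 < A.card := Finset.card_pos.2 ⟨0, zero_mem_sums _⟩
  have hnc : ∃ y ∈ V, v0 ≠ y := by
    by_contra! hh
    exact hcoset ⊥ hbt fun z hz => by rw [hh z hz]; simp
  by_cases hs0 : A.card = Nat.card C
  · exact win hZ hl (by omega) hPZ (univ_of_card hs0.ge) (by omega)
  by_cases hs1 : A.card + 1 = Nat.card C
  · obtain ⟨y, hy, hvy⟩ := hnc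
    obtain ⟨V', hV'⟩ := two_le_of_mem hv0 hy hvy
    apply win hZ hl (by omega) (P := (v0, y) ::ₘ P)
    · rw [both_cons, ← hV, hV']
      simp only [Multiset.add_cons]
      exact Multiset.cons_le_cons _ (Multiset.cons_le_cons _ (Multiset.le_add_right _ _))
    · rw [sums_diffs_cons, ← hA]
      apply univ_of_card
      have := growth_step (A := A) (Q := ⊥) (x := y - v0) bot_le (by
        rw [stab_bot_of_card hs1]; simpa [sub_eq_zero] using hvy.symm)
      rw [Nat.card_unique] at this
      omega
    · rw [Multiset.card_cons]; omega
  have hAu : A ≠ Finset.univ := by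
    intro h; rw [h, Finset.card_univ, ← Nat.card_eq_fintype_card] at hs0; exact hs0 rfl
  by_cases hsb : stab A = ⊥
  · have hA2 : 2 ≤ A.card := by
      by_contra hlt
      obtain ⟨y, hy, hvy⟩ := hnc
      have h1 := hmax v0 hv0 y hy hvy
      have := growth_step (A := A) (Q := ⊥) (x := y - v0) bot_le (by
        rw [hsb]; simpa [sub_eq_zero] using hvy.symm)
      rw [Nat.card_unique] at this
      omega
    by_cases hR : 3 ≤ V.toFinset.card
    · obtain ⟨Q, hQ, hall⟩ := claimR hsb hA2 (by rw [← Nat.card_eq_fintype_card]; omega)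
        V.toFinset hR (by
          intro r hr r' hr'
          rw [Multiset.mem_toFinset] at hr hr'
          rw [near_iff]
          by_cases hrr : r' = r
          · rw [hrr, sub_self]; exact cl_zero A
          apply cl_of_growth
          have := hmax r' hr' r hr hrr
          omega)
      exact hcoset Q hQ fun z hz => hall z (Multiset.mem_toFinset.2 hz) v0
        (Multiset.mem_toFinset.2 hv0)
    · obtain ⟨v, hv⟩ := card_two_values (V := V) (by omega)
      refine hno ⊥ hbt (heavy_of_le (V := Multiset.replicate (V.count v) v) ?_ v ?_ ?_)
      · exact (Multiset.le_count_iff_replicate_le.1 le_rfl).trans hVZ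
      · intro z hz; rw [Multiset.eq_of_mem_replicate hz]; simp
      · rw [Multiset.card_replicate, Nat.card_unique]; omega
  · apply hcoset (stab A) (stab_ne_top ⟨0, zero_mem_sums _⟩ hAu)
    intro z hz
    by_cases hzc : v0 = z
    · rw [hzc, sub_self]; exact zero_mem _
    have h1 := hmax v0 hv0 z hz hzc
    by_contra hn
    have h3 := growth_step (A := A) (Q := stab A) le_rfl hn
    have h2 : Nat.card (stab A) ≠ 1 := fun h2 => hsb (AddSubgroup.eq_bot_of_card_eq _ h2)
    have hp : 0 < Nat.card (stab A) := Nat.card_pos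
    omega

theorem stage1 {Z : Multiset C} {l : ℕ} (hZ : NoWin Z) (hst : Star Z)
    (hl : Multiset.card Z = 2 * Nat.card C + l) (hl1 : l + 2 ≤ Nat.card C)
    (hl2 : Nat.card C + 2 ≤ 2 * l) : ∃ c, l + 2 ≤ Z.count c := by
  obtain ⟨Q0, hQ0, hh0⟩ := stepB hZ hl hl1 hl2
  have key : ∀ Q : AddSubgroup C, Q ≠ ⊤ → Heavy Z l Q → Heavy Z l ⊥ := by
    intro Q
    induction Q using WellFoundedLT.induction with
    | ind Q ih =>
      intro ht hh
      by_cases hb : Q = ⊥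
      · rw [← hb]; exact hh
      obtain ⟨Q', hlt, hh'⟩ := stepA hZ hst hl hl1 hl2 hb ht hh
      exact ih Q' hlt (ne_top_of_lt hlt) hh'
  obtain ⟨c, hc⟩ := key Q0 hQ0 hh0
  refine ⟨c, ?_⟩
  rw [Nat.card_unique] at hc
  have : (Z.filter fun z => z - c ∈ (⊥ : AddSubgroup C)) = Z.filter fun z => c = z := by
    apply Multiset.filter_congr
    intro x _
    rw [AddSubgroup.mem_bot, sub_eq_zero, eq_comm]
  rw [this, ← Multiset.countP_eq_card_filter] at hc
  exact hc

end

end Dav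

end Part5

section Part6

open scoped Classical Pointwise

namespace Dav

section

theorem count_both {α : Type*} {P : Multiset (α × α)} (h : ∀ p ∈ P, p.1 ≠ p.2) (x : α) :
    (both P).count x ≤ Multiset.card P := by
  induction P using Multiset.induction_on with
  | empty => simp [both]
  | cons p P ih =>
    have h1 := ih fun q hq => h q (Multiset.mem_cons_of_mem hq)
    have h2 := h p (Multiset.mem_cons_self p P)
    obtain ⟨y, z⟩ := p
    rw [both_cons, Multiset.count_cons, Multiset.count_cons, Multiset.card_cons]
    simp only at h2
    split_ifs with ha hb
    · exact absurd (hb.symm.trans ha) h2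
    all_goals omega

theorem card_filter_add {α : Type*} (p : α → Prop) (Z : Multiset α) :
    Multiset.card (Z.filter p) + Multiset.card (Z.filter fun z => ¬ p z) = Multiset.card Z := by
  rw [← Multiset.card_add, Multiset.filter_add_not]

theorem exists_rest {α : Type*} {s t : Multiset α} (h : s ≤ t) : ∃ u, t = s + u :=
  Multiset.le_iff_exists_add.1 h

variable {C : Type*} [AddCommGroup C] [Fintype C]

theorem win3 {Z D : Multiset C} {l a : ℕ} (hZ : NoWin Z)
    (hl : Multiset.card Z = 2 * Nat.card C + l) (hln : l ≤ 2 * Nat.card C)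
    (hD : Z = Multiset.replicate a 0 + D) {E : Multiset C} {P : Multiset (C × C)}
    (hE : both P + E ≤ Multiset.replicate (a - Multiset.card E) 0 + D)
    (ha : Multiset.card E ≤ a)
    (hs : sums (sums {0} E) (diffs P) = Finset.univ)
    (hc : Multiset.card E + Multiset.card P ≤ l) : False := by
  apply win hZ hl hln (P := E.map (fun x => ((0 : C), x)) + P)
  · rw [both_add, both, Multiset.map_map, Multiset.map_map]
    simp only [Function.comp_def, Multiset.map_const', Multiset.map_id']
    rw [hD, add_assoc, add_comm E]
    calc Multiset.replicate (Multiset.card E) 0 + (both P + E)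
        ≤ Multiset.replicate (Multiset.card E) 0 +
          (Multiset.replicate (a - Multiset.card E) 0 + D) := add_le_add le_rfl hE
      _ = _ := by rw [← add_assoc, ← Multiset.replicate_add]; congr 2; omega
  · rw [diffs_add, sums_add]
    have : diffs (E.map (fun x => ((0 : C), x))) = E := by
      simp [diffs, Multiset.map_map, Function.comp_def]
    rw [this]; exact hs
  · rw [Multiset.card_add, Multiset.card_map]; exact hc

theorem win2 {Z D : Multiset C} {l a : ℕ} (hZ : NoWin Z)
    (hl : Multiset.card Z = 2 * Nat.card C + l) (hln : l ≤ 2 * Nat.card C)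
    (hD : Z = Multiset.replicate a 0 + D) (ha : l ≤ a) {E : Multiset C}
    (hE : E ≤ D) (hs : sums {0} E = Finset.univ)
    (hc : Multiset.card E ≤ l) : False := by
  apply win3 hZ hl hln hD (E := E) (P := 0)
  · simp only [both, Multiset.map_zero, zero_add]
    exact hE.trans (Multiset.le_add_left _ _)
  · omega
  · simp only [diffs, Multiset.map_zero, sums_zero]; exact hs
  · simpa using hc

theorem star_univ0 {Z D : Multiset C} {a : ℕ} (hst : Star Z)
    (hD : Z = Multiset.replicate a 0 + D) {Q : AddSubgroup C} (hb : Q ≠ ⊥) :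
    sums (sg Q) (D.filter fun z => z ∉ Q) = Finset.univ := by
  have h := star_univ hst hb 0
  simp only [sub_zero, Multiset.map_id'] at h
  rw [hD, Multiset.filter_add] at h
  have : (Multiset.replicate a (0 : C)).filter (fun z => z ∉ Q) = 0 := by
    rw [Multiset.filter_eq_nil]
    intro z hz; rw [Multiset.eq_of_mem_replicate hz]; simp
  rw [this, zero_add] at h
  exact h

theorem s2a {Z D : Multiset C} {l a : ℕ} (hZ : NoWin Z) (hst : Star Z)
    (hl : Multiset.card Z = 2 * Nat.card C + l) (hl1 : l + 2 ≤ Nat.card C)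
    (hl2 : Nat.card C + 2 ≤ 2 * l)
    (hD : Z = Multiset.replicate a 0 + D) (hD0 : ∀ x ∈ D, x ≠ 0) (ha : l + 2 ≤ a)
    (hDc : Nat.card C ≤ Multiset.card D + 1) :
    ∀ Q : AddSubgroup C, Q ≠ ⊤ → Q ≠ ⊥ →
      Multiset.card (D.filter fun z => z ∉ Q) + Nat.card Q ≤ Nat.card C → False := by
  intro Q
  induction Q using WellFoundedLT.induction with
  | ind Q ih =>
  intro ht hb hp
  have hfil := card_filter_add (fun z => z ∈ Q) D
  set A := sums {0} (D.filter fun z => z ∈ Q) with hA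
  have hAQ : ∀ a ∈ A, a ∈ Q := by
    apply sums_subset_subgroup
    · intro a ha; rw [Finset.mem_singleton.1 ha]; exact Q.zero_mem
    · intro d hd; exact (Multiset.mem_filter.1 hd).2
  by_cases hAe : A = sg Q
  · obtain ⟨E1, hE1, hs1, hk1⟩ := KL {0} ⊥ bot_le (D.filter fun z => z ∈ Q)
    rw [← hA, hAe] at hs1 hk1
    rw [card_sg, Finset.card_singleton, Nat.card_unique] at hk1
    obtain ⟨E2, hE2, hs2, hk2⟩ := KL (sg Q) Q (le_stab_sg Q) (D.filter fun z => z ∉ Q)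
    rw [star_univ0 hst hD hb] at hs2 hk2
    rw [card_sg, Finset.card_univ, ← Nat.card_eq_fintype_card] at hk2
    obtain ⟨i, hi2, hq2, hi⟩ := sub_card hb ht
    have hEi : Multiset.card E2 + 1 ≤ i := by
      have : Nat.card Q * (Multiset.card E2 + 1) ≤ Nat.card Q * i := by
        rw [← hi, mul_add]; omega
      exact le_of_mul_le_mul_left this (by omega)
    have har := arith1 hq2 hi2
    rw [← hi] at har
    apply win2 hZ hl (by omega) hD (by omega) (E := E1 + E2)
    · rw [← Multiset.filter_add_not (fun z => z ∈ Q) D]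
      exact add_le_add hE1 hE2
    · rw [sums_add, hs1, hs2]
    · rw [Multiset.card_add]; omega
  · have hle : stab A ≤ Q := stab_le_of_sub (zero_mem_sums _) hAQ
    have hg := per_growth (le_refl (stab A)) (hle.trans (le_stab_sg Q)) (subset_sg hAQ) hAe
    rw [card_sg] at hg
    have hpos : 0 < A.card := Finset.card_pos.2 ⟨0, zero_mem_sums _⟩
    have hK := K {0} (D.filter fun z => z ∈ Q) (by simp) (stab A) rfl
    rw [← hA, Multiset.filter_filter] at hK
    by_cases hsb : stab A = ⊥
    · have : (D.filter fun z => z ∉ stab A ∧ z ∈ Q) = D.filter fun z => z ∈ Q := by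
        apply Multiset.filter_congr
        intro x hx
        rw [hsb, AddSubgroup.mem_bot]
        simp [hD0 x hx]
      rw [this, hsb, Nat.card_unique] at hK
      rw [hsb, Nat.card_unique] at hg
      omega
    · refine ih (stab A) (lt_of_le_of_ne hle ?_) (stab_ne_top ⟨0, zero_mem_sums _⟩ ?_) hsb ?_
      · intro h; rw [h] at hg; omega
      · intro h
        apply ht
        rw [eq_top_iff]
        intro x _
        exact hAQ x (h ▸ Finset.mem_univ x)
      · have h1 := card_filter_add (fun z => z ∈ Q) (D.filter fun z => z ∉ stab A)
        rw [Multiset.filter_filter, Multiset.filter_filter] at h1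
        have h2 : Multiset.card (D.filter fun z => z ∉ Q ∧ z ∉ stab A)
            ≤ Multiset.card (D.filter fun z => z ∉ Q) :=
          Multiset.card_le_card (Multiset.monotone_filter_right _ fun z hz => hz.1)
        have h3 : (D.filter fun z => z ∉ stab A ∧ z ∈ Q) = D.filter fun z => z ∈ Q ∧ z ∉ stab A :=
          Multiset.filter_congr fun x _ => and_comm
        rw [h3] at hK
        have hp : 0 < Nat.card (stab A) := Nat.card_pos
        have := Nat.le_mul_of_pos_left
          (Multiset.card (D.filter fun z => z ∈ Q ∧ z ∉ stab A)) hp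
        omega

theorem s2b {Z D : Multiset C} {l a : ℕ} (hZ : NoWin Z) (hst : Star Z)
    (hl : Multiset.card Z = 2 * Nat.card C + l) (hl1 : l + 2 ≤ Nat.card C)
    (hl2 : Nat.card C + 2 ≤ 2 * l)
    (hD : Z = Multiset.replicate a 0 + D) (hD0 : ∀ x ∈ D, x ≠ 0) (ha : l + 2 ≤ a)
    (hDc : Nat.card C ≤ Multiset.card D + 1) :
    ∃ d, 2 * Multiset.card (D.filter fun z => z ≠ d) + 2 ≤ Nat.card C := by
  have hno := s2a hZ hst hl hl1 hl2 hD hD0 ha hDc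
  obtain ⟨E, ⟨hED, hE2⟩, hEmax⟩ := exists_max
    (fun E : Multiset C => E ≤ D ∧ 2 * Multiset.card E ≤ (sums {0} E).card)
    (fun E => Multiset.card E) (Multiset.card D) ⟨0, by simp, by simp⟩
    (fun E h => Multiset.card_le_card h.1)
  obtain ⟨F, rfl⟩ := exists_rest hED
  set A := sums {0} E with hA
  have hAn : A.card ≤ Nat.card C := by
    rw [Nat.card_eq_fintype_card]; exact Finset.card_le_univ A
  have hpos : 0 < A.card := Finset.card_pos.2 ⟨0, zero_mem_sums _⟩
  rw [Multiset.card_add] at hDc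
  obtain ⟨x0, hx0⟩ := Multiset.card_pos_iff_exists_mem.1 (by omega : 0 < Multiset.card F)
  have hF0 : ∀ x ∈ F, x ≠ 0 := fun x hx => hD0 x (Multiset.mem_add.2 (Or.inr hx))
  have hFle : ∀ x ∈ F, x ::ₘ E ≤ E + F := by
    intro x hx
    rw [← Multiset.singleton_add, add_comm]
    exact add_le_add le_rfl (Multiset.singleton_le.2 hx)
  have hF : ∀ x ∈ F, (A ∪ (x +ᵥ A)).card < 2 * (Multiset.card E + 1) := by
    intro x hx
    by_contra! hlt
    have := hEmax (x ::ₘ E) ⟨hFle x hx, by rw [sums_cons, Multiset.card_cons]; exact hlt⟩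
    simp at this
  have hcos : ∀ Q : AddSubgroup C, Q ≠ ⊤ → ¬ ∀ x ∈ F, x ∈ Q := by
    intro Q hQ hall
    refine hno Q hQ ?_ ?_
    · intro h
      have := hall x0 hx0
      rw [h, AddSubgroup.mem_bot] at this
      exact hF0 x0 hx0 this
    · have h1 := card_lt_of_ne_top hQ
      have h2 : F.filter (fun z => z ∉ Q) = 0 := by
        rw [Multiset.filter_eq_nil]; intro z hz; simpa using hall z hz
      rw [Multiset.filter_add, h2, add_zero]
      have h3 := Multiset.card_le_card (Multiset.filter_le (fun z => z ∉ Q) E)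
      omega
  by_cases hs0 : A.card = Nat.card C
  · exact (win2 hZ hl (by omega) hD (by omega) hED (univ_of_card hs0.ge) (by omega)).elim
  by_cases hs1 : A.card + 1 = Nat.card C
  · refine (win2 hZ hl (by omega) hD (by omega) (hFle x0 hx0) ?_ ?_).elim
    · rw [sums_cons, ← hA]
      apply univ_of_card
      have := growth_step (A := A) (Q := ⊥) (x := x0) bot_le (by
        rw [stab_bot_of_card hs1]; simpa using hF0 x0 hx0)
      rw [Nat.card_unique] at this
      omega
    · rw [Multiset.card_cons]; omega
  have hAu : A ≠ Finset.univ := by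
    intro h; rw [h, Finset.card_univ, ← Nat.card_eq_fintype_card] at hs0; exact hs0 rfl
  by_cases hsb : stab A = ⊥
  swap
  · exfalso
    apply hcos (stab A) (stab_ne_top ⟨0, zero_mem_sums _⟩ hAu)
    intro z hz
    have h1 := hF z hz
    by_contra hn
    have h3 := growth_step (A := A) (Q := stab A) le_rfl hn
    have h2 : Nat.card (stab A) ≠ 1 := fun h2 => hsb (AddSubgroup.eq_bot_of_card_eq _ h2)
    have hp : 0 < Nat.card (stab A) := Nat.card_pos
    omega
  have hA2 : 2 ≤ A.card := by
    by_contra hlt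
    have h1 := hF x0 hx0
    have := growth_step (A := A) (Q := ⊥) (x := x0) bot_le (by
      rw [hsb]; simpa using hF0 x0 hx0)
    rw [Nat.card_unique] at this
    omega
  have hd : ∀ y ∈ F, y = 0 ∨ y = x0 ∨ y = -x0 := by
    rcases claimRR hsb hA2 (by rw [← Nat.card_eq_fintype_card]; omega) {x | x ∈ F} (by
      intro x hx
      apply cl_of_growth
      have := hF x hx
      omega) hx0 (hF0 x0 hx0) with h | ⟨Q, hQ, h⟩
    · exact h
    · exact absurd h (hcos Q hQ)
  obtain ⟨P, V, hV, hne, hP, hmax⟩ :=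
    maxpair A (Multiset.replicate (a - Multiset.card E) 0 + F) 2 (2 * Multiset.card E) hE2
  set B := sums A (diffs P) with hB
  have hBn : B.card ≤ Nat.card C := by
    rw [Nat.card_eq_fintype_card]; exact Finset.card_le_univ B
  have hAB : A ⊆ B := subset_sums _ _
  have h0B : (0 : C) ∈ B := hAB (zero_mem_sums _)
  have hABc := Finset.card_le_card hAB
  have hVF : ∀ v ∈ V, v = 0 ∨ v = x0 ∨ v = -x0 := by
    intro v hv
    have : v ∈ Multiset.replicate (a - Multiset.card E) 0 + F := by
      rw [← hV]; exact Multiset.mem_add.2 (Or.inr hv)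
    rcases Multiset.mem_add.1 this with h | h
    · exact Or.inl (Multiset.eq_of_mem_replicate h)
    · exact hd v h
  have hcF0 : F.count 0 = 0 := Multiset.count_eq_zero.2 fun h => hF0 0 h rfl
  have hcV0 : V.count 0 + (both P).count 0 = a - Multiset.card E := by
    have := congrArg (Multiset.count 0) hV
    rw [Multiset.count_add, Multiset.count_add, Multiset.count_replicate_self, hcF0] at this
    omega
  have hcP := count_both hne
  have h0V : (0 : C) ∈ V := by
    rw [← Multiset.count_pos]
    have := hcP 0
    omega
  have hcard : 2 * Multiset.card P + Multiset.card V
      = a - Multiset.card E + Multiset.card F := by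
    have := congrArg Multiset.card hV
    rwa [Multiset.card_add, card_both, Multiset.card_add, Multiset.card_replicate] at this
  have hEP : both P + E ≤ Multiset.replicate (a - Multiset.card E) 0 + (E + F) := by
    rw [add_comm E F, ← add_assoc, ← hV, add_assoc, add_comm V E]
    exact add_le_add le_rfl (Multiset.le_add_right _ _)
  by_cases ht0 : B.card = Nat.card C
  · exact (win3 hZ hl (by omega) hD hEP (by omega) (univ_of_card ht0.ge) (by omega)).elim
  have hE1 : 0 < Multiset.card E := by
    rw [Multiset.card_pos]
    intro h
    rw [hA, h, sums_zero, Finset.card_singleton] at hA2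
    omega
  obtain ⟨v, hv, hv0⟩ : ∃ v ∈ V, v ≠ 0 := by
    by_contra! hall
    have h1 : V.count 0 = Multiset.card V := by
      rw [Multiset.count_eq_card]; intro x hx; exact (hall x hx).symm
    have h2 := hcP 0
    omega
  have hvF : ∀ y ∈ F, y = 0 ∨ y = v ∨ y = -v := by
    intro y hy
    rcases hVF v hv with h | h | h
    · exact absurd h hv0
    · rw [h]; exact hd y hy
    · rw [h, neg_neg]
      have := hd y hy
      tauto
  have hvQ : ∀ Q : AddSubgroup C, Q ≠ ⊤ → v ∉ Q := by
    intro Q hQ hvQ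
    apply hcos Q hQ
    intro y hy
    rcases hvF y hy with h | h | h
    · rw [h]; exact Q.zero_mem
    · rw [h]; exact hvQ
    · rw [h]; exact Q.neg_mem hvQ
  by_cases ht1 : B.card + 1 = Nat.card C
  · obtain ⟨V', hV'⟩ := two_le_of_mem h0V hv hv0.symm
    refine (win3 hZ hl (by omega) hD (E := E) (P := (0, v) ::ₘ P) ?_ (by omega) ?_ ?_).elim
    · rw [add_comm E F, ← add_assoc, ← hV, both_cons, hV']
      simp only [Multiset.add_cons, Multiset.cons_add]
      exact Multiset.cons_le_cons _ (Multiset.cons_le_cons _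
        (add_le_add (Multiset.le_add_right _ _) le_rfl))
    · rw [sums_diffs_cons, ← hA, ← hB, sub_zero]
      apply univ_of_card
      have := growth_step (A := B) (Q := ⊥) (x := v) bot_le (by
        rw [stab_bot_of_card ht1]; simpa using hv0)
      rw [Nat.card_unique] at this
      omega
    · rw [Multiset.card_cons]; omega
  have hBu : B ≠ Finset.univ := by
    intro h; rw [h, Finset.card_univ, ← Nat.card_eq_fintype_card] at ht0; exact ht0 rfl
  have hgv := hmax 0 h0V v hv hv0.symm
  rw [sub_zero] at hgv
  by_cases htb : stab B = ⊥
  swap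
  · exfalso
    apply hvQ (stab B) (stab_ne_top ⟨0, h0B⟩ hBu)
    by_contra hn
    have h3 := growth_step (A := B) (Q := stab B) le_rfl hn
    have h2 : Nat.card (stab B) ≠ 1 := fun h2 => htb (AddSubgroup.eq_bot_of_card_eq _ h2)
    have hp : 0 < Nat.card (stab B) := Nat.card_pos
    omega
  have hneg : -v ∈ V → -v = v := by
    intro hnv
    by_contra hnn
    obtain ⟨Q, hQ, hall⟩ := claimR htb (hA2.trans hABc)
      (by rw [← Nat.card_eq_fintype_card]; omega) ({0, v, -v} : Finset C) (by
        rw [Finset.card_insert_of_notMem, Finset.card_pair (Ne.symm hnn)]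
        simp only [Finset.mem_insert, Finset.mem_singleton, not_or]
        exact ⟨hv0.symm, fun h => hv0 (neg_eq_zero.1 h.symm)⟩) (by
        intro r hr r' hr'
        have hmem : ∀ r ∈ ({0, v, -v} : Finset C), r ∈ V := by
          intro r hr
          simp only [Finset.mem_insert, Finset.mem_singleton] at hr
          rcases hr with rfl | rfl | rfl
          exacts [h0V, hv, hnv]
        rw [near_iff]
        by_cases hrr : r' = r
        · rw [hrr, sub_self]; exact cl_zero B
        apply cl_of_growth
        have := hmax r' (hmem _ hr') r (hmem _ hr) hrr
        omega)
    apply hvQ Q hQ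
    have := hall v (by simp) 0 (by simp)
    rwa [sub_zero] at this
  refine ⟨v, ?_⟩
  have h1 : Multiset.card (F.filter fun z => z ≠ v) ≤ Multiset.card P := by
    by_cases hvv : -v = v
    · have : F.filter (fun z => z ≠ v) = 0 := by
        rw [Multiset.filter_eq_nil]
        intro z hz hzv
        rcases hvF z hz with h | h | h
        · exact hF0 z hz h
        · exact hzv h
        · exact hzv (h.trans hvv)
      rw [this]; simp
    · have hnV : V.count (-v) = 0 := Multiset.count_eq_zero.2 fun h => hvv (hneg h)
      have : F.filter (fun z => z ≠ v) = F.filter fun z => -v = z := by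
        apply Multiset.filter_congr
        intro z hz
        constructor
        · intro hzv
          rcases hvF z hz with h | h | h
          · exact absurd h (hF0 z hz)
          · exact absurd h hzv
          · exact h.symm
        · rintro rfl; exact hvv
      rw [this, ← Multiset.countP_eq_card_filter]
      have h3 : Multiset.count (-v) F ≤ Multiset.count (-v) (both P + V) := by
        rw [hV]; exact Multiset.count_le_of_le _ (Multiset.le_add_left _ _)
      rw [Multiset.count_add, hnV] at h3
      have h4 := hcP (-v)
      exact h3.trans h4
  have h2 := Multiset.card_le_card (Multiset.filter_le (fun z => z ≠ v) E)
  rw [Multiset.filter_add, Multiset.card_add]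
  omega

end

end Dav

end Part6

section Part7

open scoped Classical Pointwise

namespace Dav

section

variable {C : Type*} [AddCommGroup C] [Fintype C]

theorem sum_map_sub_const {G : Type*} [AddCommGroup G] (T : Multiset G) (c : G) :
    (T.map fun z => z - c).sum = T.sum - Multiset.card T • c := by
  rw [Multiset.sum_map_sub, Multiset.map_id', Multiset.map_const', Multiset.sum_replicate]

theorem noWin_shift {Z : Multiset C} (hZ : NoWin Z) (c : C) : NoWin (Z.map fun z => z - c) := by
  intro T hT hc hs
  obtain ⟨T', hT', rfl⟩ := lift_le _ _ _ hT
  rw [Multiset.card_map] at hc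
  apply hZ T' hT' hc
  rw [sum_map_sub_const, hc, mul_comm, mul_smul, Nat.card_eq_fintype_card,
    card_nsmul_eq_zero, sub_zero] at hs
  exact hs

theorem star_shift {Z : Multiset C} (hZ : Star Z) (c : C) : Star (Z.map fun z => z - c) := by
  intro Q hb ht c1
  have := hZ Q hb ht (c + c1)
  rw [Multiset.filter_map, Multiset.card_map]
  simp only [Function.comp_def, sub_sub]
  exact this

def Shape (Z : Multiset C) : Prop :=
  ∃ (c c' : C) (a j : ℕ) (E : Multiset C),
    Z = Multiset.replicate a c + Multiset.replicate (Nat.card C * j) c' + E ∧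
    Nat.card C ≤ a ∧ 2 * Multiset.card E + 4 ≤ 3 * Nat.card C

theorem shape_of {Z R : Multiset C} {c c' : C} {a b : ℕ}
    (h : Z = Multiset.replicate a c + Multiset.replicate b c' + R) (ha : Nat.card C ≤ a)
    (hR : 2 * Multiset.card R + 2 ≤ Nat.card C) : Shape Z := by
  refine ⟨c, c', a, b / Nat.card C, Multiset.replicate (b % Nat.card C) c' + R, ?_, ha, ?_⟩
  · rw [h, add_assoc, add_assoc, ← add_assoc (Multiset.replicate (Nat.card C * _) c'),
      ← Multiset.replicate_add, Nat.div_add_mod]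
  · have : b % Nat.card C < Nat.card C := Nat.mod_lt _ Nat.card_pos
    rw [Multiset.card_add, Multiset.card_replicate]
    omega

theorem split_count {α : Type*} [DecidableEq α] (Z : Multiset α) (c : α) :
    Z = Multiset.replicate (Z.count c) c + Z.filter fun z => z ≠ c := by
  conv_lhs => rw [← Multiset.filter_add_not (fun z => z = c) Z]
  rw [Multiset.filter_eq' Z c]

theorem Zmain [IsAddCyclic C] {Z : Multiset C} {l : ℕ} (hZ : NoWin Z)
    (hl : Multiset.card Z = 2 * Nat.card C + l) (hl1 : l + 2 ≤ Nat.card C)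
    (hl2 : Nat.card C + 2 ≤ 2 * l) : Shape Z := by
  have hst := star_of_noWin hZ hl hl2
  obtain ⟨c, hc⟩ := stage1 hZ hst hl hl1 hl2
  have hs := split_count Z c
  have hcs := congrArg Multiset.card hs
  rw [Multiset.card_add, Multiset.card_replicate] at hcs
  by_cases hsm : Multiset.card (Z.filter fun z => z ≠ c) + 2 ≤ Nat.card C
  · exact ⟨c, c, Z.count c, 0, Z.filter fun z => z ≠ c, by simpa using hs, by omega, by omega⟩
  have hmap : Z.map (fun z => z - c) = Multiset.replicate (Z.count c) 0 +
      (Z.filter fun z => z ≠ c).map fun z => z - c := by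
    conv_lhs => rw [hs]
    rw [Multiset.map_add, Multiset.map_replicate, sub_self]
  obtain ⟨d, hd⟩ := s2b (noWin_shift hZ c) (star_shift hst c)
    (by rw [Multiset.card_map]; exact hl) hl1 hl2 hmap (by
      intro x hx
      obtain ⟨z, hz, rfl⟩ := Multiset.mem_map.1 hx
      exact sub_ne_zero.2 (Multiset.mem_filter.1 hz).2) hc (by
      rw [Multiset.card_map]; omega)
  rw [Multiset.filter_map, Multiset.card_map] at hd
  set D := Z.filter fun z => z ≠ c with hD
  have hfe : D.filter ((fun z => z ≠ d) ∘ fun z => z - c) = D.filter fun z => z ≠ c + d := by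
    apply Multiset.filter_congr
    intro z _
    simp only [Function.comp_apply, ne_eq, sub_eq_iff_eq_add']
  rw [hfe] at hd
  have hs2 := split_count D (c + d)
  have hcs2 := congrArg Multiset.card hs2
  rw [Multiset.card_add, Multiset.card_replicate] at hcs2
  rw [hs2] at hs
  by_cases hbig : Nat.card C ≤ Z.count c
  · exact shape_of (by rw [add_assoc]; exact hs) hbig hd
  · refine shape_of (c := c + d) (c' := c) (a := D.count (c + d)) (b := Z.count c)
      (R := D.filter fun z => z ≠ c + d) ?_ (by omega) hd
    rw [add_comm (Multiset.replicate (D.count (c + d)) (c + d)), add_assoc]; exact hs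

end

end Dav

end Part7

section Part8

open scoped Classical Pointwise

namespace Dav

section

theorem pigeon {α β : Type*} [Fintype β] (f : α → β) (S : Multiset α) (b : ℕ)
    (h : b * Fintype.card β < Multiset.card S) :
    ∃ T ≤ S, Multiset.card T = b + 1 ∧ ∃ q, ∀ x ∈ T, f x = q := by
  by_cases hq : ∃ q, b < Multiset.card (S.filter fun x => f x = q)
  · obtain ⟨q, hq⟩ := hq
    obtain ⟨T, hT, hc⟩ := exists_le_card (S.filter fun x => f x = q) (r := b + 1) hq
    exact ⟨T, hT.trans (Multiset.filter_le _ _), hc, q, fun x hx =>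
      (Multiset.mem_filter.1 (Multiset.mem_of_le hT hx)).2⟩
  · exfalso
    push Not at hq
    have h1 := Multiset.toFinset_sum_count_eq (S.map f)
    rw [Multiset.card_map] at h1
    have h2 : ∑ a ∈ (S.map f).toFinset, (S.map f).count a ≤ ∑ a ∈ (S.map f).toFinset, b := by
      apply Finset.sum_le_sum
      intro q _
      rw [Multiset.count_map]
      have := hq q
      have e : S.filter (fun x => q = f x) = S.filter fun x => f x = q :=
        Multiset.filter_congr fun x _ => eq_comm
      rw [e]; exact this
    rw [Finset.sum_const, smul_eq_mul, h1] at h2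
    have h3 := Nat.mul_le_mul_right b (Finset.card_le_univ (S.map f).toFinset)
    rw [mul_comm b] at h
    omega

theorem map_eq_add' {α β : Type*} {f : α → β} {S : Multiset α} {X Y : Multiset β}
    (h : S.map f = X + Y) : ∃ S1 S2, S = S1 + S2 ∧ S1.map f = X ∧ S2.map f = Y := by
  obtain ⟨S1, h1, h2⟩ := lift_le f S X (by rw [h]; exact Multiset.le_add_right _ _)
  obtain ⟨S2, rfl⟩ := exists_rest h1
  refine ⟨S1, S2, rfl, h2, ?_⟩
  rw [Multiset.map_add, h2] at h
  exact add_left_cancel h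

theorem same_pairs {α β : Type*} [Fintype β] (f : α → β) (h : ℕ) (S : Multiset α)
    (hS : Fintype.card β + 2 * h ≤ Multiset.card S) :
    ∃ P : Multiset (α × α), Multiset.card P = h ∧ both P ≤ S ∧ ∀ p ∈ P, f p.1 = f p.2 := by
  induction h generalizing S with
  | zero => exact ⟨0, rfl, by simp [both], by simp⟩
  | succ h ih =>
    obtain ⟨T, hT, hc, q, hq⟩ := pigeon f S 1 (by omega)
    obtain ⟨x, y, rfl⟩ := Multiset.card_eq_two.1 hc
    obtain ⟨R, rfl⟩ := exists_rest hT
    rw [Multiset.card_add, hc] at hS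
    obtain ⟨P, h1, h2, h3⟩ := ih R (by omega)
    refine ⟨(x, y) ::ₘ P, by simp [h1], ?_, ?_⟩
    · rw [both_cons]
      have : x ::ₘ y ::ₘ both P = {x, y} + both P := by
        simp
      rw [this]
      exact add_le_add le_rfl h2
    · intro p hp
      rcases Multiset.mem_cons.1 hp with rfl | hp
      · exact (hq x (by simp)).trans (hq y (by simp)).symm
      · exact h3 p hp

/-- matching lemma -/
theorem matching {α : Type*} (r : ℕ) (X : Multiset α) (hX : Multiset.card X = 2 * r)
    (hc : ∀ x, X.count x ≤ r) :
    ∃ P : Multiset (α × α), Multiset.card P = r ∧ both P = X ∧ ∀ p ∈ P, p.1 ≠ p.2 := by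
  induction r generalizing X with
  | zero =>
    refine ⟨0, rfl, ?_, by simp⟩
    rw [Multiset.card_eq_zero.1 hX]; simp [both]
  | succ r ih =>
    obtain ⟨x, hx, hxm⟩ := exists_max (fun x => x ∈ X) (fun x => X.count x) (r + 1)
      (Multiset.card_pos_iff_exists_mem.1 (by omega)) (fun x _ => hc x)
    have hne : ∃ y, y ∈ X ∧ y ≠ x := by
      by_contra! hh
      have h1 := Multiset.count_eq_card.2 (fun y hy => (hh y hy).symm)
      have := hc x
      omega
    obtain ⟨y, ⟨hy, hyx⟩, hym⟩ := exists_max (fun y => y ∈ X ∧ y ≠ x) (fun x => X.count x) (r + 1)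
      hne (fun x _ => hc x)
    obtain ⟨V, rfl⟩ := two_le_of_mem hx hy hyx.symm
    simp only [Multiset.card_cons] at hX
    obtain ⟨P, h1, h2, h3⟩ := ih V (by omega) (by
      intro z
      have hz := hc z
      by_contra! hlt
      have hle : V.count z ≤ (x ::ₘ y ::ₘ V).count z := by
        rw [Multiset.count_cons, Multiset.count_cons]; omega
      have hzx : z ≠ x := by
        rintro rfl
        rw [Multiset.count_cons_self, Multiset.count_cons_of_ne hyx.symm] at hz
        omega
      have hzy : z ≠ y := by
        rintro rfl
        rw [Multiset.count_cons_of_ne hyx, Multiset.count_cons_self] at hz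
        omega
      have hzm : z ∈ x ::ₘ y ::ₘ V := by
        rw [← Multiset.count_pos]; omega
      have e1 := hxm z hzm
      have e2 := hym z ⟨hzm, hzx⟩
      rw [Multiset.count_cons_of_ne hzx, Multiset.count_cons_of_ne hzy] at e1 e2
      rw [Multiset.count_cons_self, Multiset.count_cons_of_ne hyx.symm] at e1
      rw [Multiset.count_cons_of_ne hyx, Multiset.count_cons_self] at e2
      have hsub : Multiset.replicate (V.count z) z + Multiset.replicate (V.count y) y
          + Multiset.replicate (V.count x) x ≤ V := by
        rw [Multiset.le_iff_count]
        intro w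
        simp only [Multiset.count_add, Multiset.count_replicate]
        by_cases w1 : z = w
        · subst w1; simp [hzx.symm, hzy.symm]
        by_cases w2 : y = w
        · subst w2; simp [hyx.symm, w1]
        by_cases w3 : x = w
        · subst w3; simp [w1, w2]
        simp [w1, w2, w3]
      have := Multiset.card_le_card hsub
      simp only [Multiset.card_add, Multiset.card_replicate] at this
      have := hc x
      rw [Multiset.count_cons_self, Multiset.count_cons_of_ne hyx.symm] at this
      omega)
    refine ⟨(x, y) ::ₘ P, by simp [h1], by rw [both_cons, h2], ?_⟩
    intro p hp
    rcases Multiset.mem_cons.1 hp with rfl | hp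
    · exact hyx.symm
    · exact h3 p hp

end

section blocks

variable {G : Type*} [AddCommGroup G]

def Blk (C : AddSubgroup G) (m : ℕ) : Type _ :=
  {B : Multiset G // Multiset.card B = m ∧ B.sum ∈ C ∧ ∃ q : G ⧸ C, ∀ x ∈ B, (x : G ⧸ C) = q}

variable {C : AddSubgroup G} {m : ℕ}

def Blk.val (B : Blk C m) : C := ⟨B.1.sum, B.2.2.1⟩

noncomputable def Blk.fib (B : Blk C m) : G ⧸ C := B.2.2.2.choose

theorem Blk.fib_spec (B : Blk C m) : ∀ x ∈ B.1, (x : G ⧸ C) = B.fib := B.2.2.2.choose_spec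

def jn (𝔅 : Multiset (Blk C m)) : Multiset G := (𝔅.map fun B => B.1).sum

theorem jn_zero : jn (0 : Multiset (Blk C m)) = 0 := rfl

theorem jn_cons (B : Blk C m) (𝔅 : Multiset (Blk C m)) : jn (B ::ₘ 𝔅) = B.1 + jn 𝔅 := by
  simp [jn]

theorem jn_add (𝔅 𝔅' : Multiset (Blk C m)) : jn (𝔅 + 𝔅') = jn 𝔅 + jn 𝔅' := by
  simp [jn]

theorem card_jn (𝔅 : Multiset (Blk C m)) : Multiset.card (jn 𝔅) = m * Multiset.card 𝔅 := by
  induction 𝔅 using Multiset.induction_on with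
  | empty => simp [jn_zero]
  | cons B 𝔅 ih => rw [jn_cons, Multiset.card_add, ih, B.2.1, Multiset.card_cons]; ring

theorem sum_jn (𝔅 : Multiset (Blk C m)) : (jn 𝔅).sum = ((𝔅.map Blk.val).sum : C) := by
  induction 𝔅 using Multiset.induction_on with
  | empty => simp [jn_zero]
  | cons B 𝔅 ih => rw [jn_cons, Multiset.sum_add, ih]; simp [Blk.val]

theorem jn_mono {𝔅 𝔅' : Multiset (Blk C m)} (h : 𝔅 ≤ 𝔅') : jn 𝔅 ≤ jn 𝔅' := by
  obtain ⟨R, rfl⟩ := exists_rest h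
  rw [jn_add]; exact Multiset.le_add_right _ _

theorem blk_sum (hm : ∀ g : G, m • g ∈ C) {B : Multiset G} (hB : Multiset.card B = m)
    {q : G ⧸ C} (hq : ∀ x ∈ B, (x : G ⧸ C) = q) : B.sum ∈ C := by
  rw [← QuotientAddGroup.eq_zero_iff]
  have e1 := map_multiset_sum (QuotientAddGroup.mk' C) B
  simp only [QuotientAddGroup.coe_mk'] at e1
  rw [e1, Multiset.map_congr rfl hq, Multiset.map_const', hB, Multiset.sum_replicate]
  obtain ⟨g, rfl⟩ := QuotientAddGroup.mk_surjective q
  rw [← QuotientAddGroup.mk_nsmul, QuotientAddGroup.eq_zero_iff]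
  exact hm g

/-- build a block -/
theorem mk_blk (hm : ∀ g : G, m • g ∈ C) {B : Multiset G} (hB : Multiset.card B = m)
    {q : G ⧸ C} (hq : ∀ x ∈ B, (x : G ⧸ C) = q) : ∃ b : Blk C m, b.1 = B :=
  ⟨⟨B, hB, blk_sum hm hB hq, q, hq⟩, rfl⟩

theorem decompose [Fintype (G ⧸ C)] (hm : ∀ g : G, m • g ∈ C) (hm1 : 1 ≤ m) (S : Multiset G) :
    ∃ (𝔅 : Multiset (Blk C m)) (L : Multiset G), jn 𝔅 + L = S ∧
      Multiset.card L ≤ (m - 1) * Fintype.card (G ⧸ C) := by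
  induction hs : Multiset.card S using Nat.strong_induction_on generalizing S with
  | _ s ih =>
  by_cases hle : Multiset.card S ≤ (m - 1) * Fintype.card (G ⧸ C)
  · exact ⟨0, S, by simp [jn_zero], hle⟩
  obtain ⟨T, hT, hc, q, hq⟩ := pigeon (fun x : G => (x : G ⧸ C)) S (m - 1) (by omega)
  obtain ⟨b, hb⟩ := mk_blk hm (by omega) hq
  obtain ⟨R, rfl⟩ := exists_rest hT
  rw [Multiset.card_add] at hs
  obtain ⟨𝔅, L, h1, h2⟩ := ih (Multiset.card R) (by omega) R rfl
  exact ⟨b ::ₘ 𝔅, L, by rw [jn_cons, hb, add_assoc, h1], h2⟩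

/-- constant blocks -/
def Blk.Const (B : Blk C m) : Prop := ∃ g, B.1 = Multiset.replicate m g

theorem exists_best [Fintype (G ⧸ C)] (hm : ∀ g : G, m • g ∈ C) (hm1 : 1 ≤ m) (S : Multiset G) :
    ∃ (𝔅 : Multiset (Blk C m)) (L : Multiset G), jn 𝔅 + L = S ∧
      Multiset.card L ≤ (m - 1) * Fintype.card (G ⧸ C) ∧
      ∀ 𝔅' : Multiset (Blk C m), jn 𝔅' = jn 𝔅 → Multiset.card (𝔅'.filter Blk.Const)
        ≤ Multiset.card (𝔅.filter Blk.Const) := by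
  obtain ⟨𝔅0, L, h1, h2⟩ := decompose hm hm1 S
  obtain ⟨𝔅, hb, hmax⟩ := exists_max (fun 𝔅 => jn 𝔅 = jn 𝔅0)
    (fun 𝔅 : Multiset (Blk C m) => Multiset.card (𝔅.filter Blk.Const)) (Multiset.card S)
    ⟨𝔅0, rfl⟩ (by
      intro 𝔅 hb
      have e1 := card_jn 𝔅
      rw [hb] at e1
      have e2 := congrArg Multiset.card h1
      rw [Multiset.card_add] at e2
      have e3 := Multiset.card_le_card (Multiset.filter_le Blk.Const 𝔅)
      have e4 := Nat.le_mul_of_pos_left (Multiset.card 𝔅) hm1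
      omega)
  exact ⟨𝔅, L, by rw [hb, h1], h2, fun 𝔅' h => hmax 𝔅' (h.trans hb)⟩

/-- In a maximal decomposition, two nonconstant blocks in the same fibre have small counts. -/
theorem count_small (hm : ∀ g : G, m • g ∈ C) {𝔅 : Multiset (Blk C m)}
    (hmax : ∀ 𝔅' : Multiset (Blk C m), jn 𝔅' = jn 𝔅 → Multiset.card (𝔅'.filter Blk.Const)
        ≤ Multiset.card (𝔅.filter Blk.Const)) {b b' : Blk C m} {R : Multiset (Blk C m)}
    (h : 𝔅 = b ::ₘ b' ::ₘ R) (hb : ¬ b.Const) (hb' : ¬ b'.Const) (hf : b.fib = b'.fib) (g : G) :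
    (b.1 + b'.1).count g ≤ m := by
  by_contra! hlt
  obtain ⟨Y, hY⟩ := exists_rest (Multiset.le_count_iff_replicate_le.1 hlt.le)
  have hq : ∀ x ∈ b.1 + b'.1, (x : G ⧸ C) = b.fib := by
    intro x hx
    rcases Multiset.mem_add.1 hx with hx | hx
    · exact b.fib_spec x hx
    · rw [hf]; exact b'.fib_spec x hx
  have hcY := congrArg Multiset.card hY
  simp only [Multiset.card_add, b.2.1, b'.2.1, Multiset.card_replicate] at hcY
  obtain ⟨d, hd⟩ := mk_blk hm (B := Multiset.replicate m g) (by simp) (q := b.fib) (by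
    intro x hx; apply hq; rw [hY]; exact Multiset.mem_add.2 (Or.inl hx))
  obtain ⟨e, he⟩ := mk_blk hm (B := Y) (by omega) (q := b.fib) (by
    intro x hx; apply hq; rw [hY]; exact Multiset.mem_add.2 (Or.inr hx))
  have h1 := hmax (d ::ₘ e ::ₘ R) (by
    rw [h, jn_cons, jn_cons, jn_cons, jn_cons, ← add_assoc, ← add_assoc, hd, he, hY])
  rw [h, Multiset.filter_cons_of_neg _ hb, Multiset.filter_cons_of_neg _ hb',
    Multiset.filter_cons_of_pos _ ⟨g, hd⟩, Multiset.card_cons, Multiset.filter_cons] at h1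
  rw [Multiset.card_add] at h1
  omega

end blocks

end Dav

end Part8

section Part9

open scoped Classical Pointwise

namespace Dav

section

variable {G : Type*} [AddCommGroup G] {C : AddSubgroup G} {m : ℕ}

theorem pairs_of (hm : ∀ g : G, m • g ∈ C) (PP : Multiset (Blk C m × Blk C m))
    (h : ∀ p ∈ PP, p.1.fib = p.2.fib ∧ ∀ g, (p.1.1 + p.2.1).count g ≤ m) :
    ∃ P0 : Multiset (G × G), Multiset.card P0 = m * Multiset.card PP ∧
      both P0 = jn (both PP) ∧ (∀ p ∈ P0, p.1 ≠ p.2 ∧ p.2 - p.1 ∈ C) ∧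
      (P0.map Prod.fst).sum ∈ C := by
  induction PP using Multiset.induction_on with
  | empty => exact ⟨0, by simp, by simp [both, jn_zero], by simp, by simp⟩
  | cons p PP ih =>
    obtain ⟨P, h1, h2, h3, h4⟩ := ih fun q hq => h q (Multiset.mem_cons_of_mem hq)
    obtain ⟨hf, hg⟩ := h p (Multiset.mem_cons_self _ _)
    obtain ⟨P', k1, k2, k3⟩ := matching m (p.1.1 + p.2.1) (by
      rw [Multiset.card_add, p.1.2.1, p.2.2.1]; ring) hg
    have hq : ∀ x ∈ both P', (x : G ⧸ C) = p.1.fib := by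
      intro x hx
      rw [k2] at hx
      rcases Multiset.mem_add.1 hx with hx | hx
      · exact p.1.fib_spec x hx
      · rw [hf]; exact p.2.fib_spec x hx
    have hq1 : ∀ r ∈ P', (r.1 : G ⧸ C) = p.1.fib := fun r hr =>
      hq _ (Multiset.mem_add.2 (Or.inl (Multiset.mem_map_of_mem _ hr)))
    have hq2 : ∀ r ∈ P', (r.2 : G ⧸ C) = p.1.fib := fun r hr =>
      hq _ (Multiset.mem_add.2 (Or.inr (Multiset.mem_map_of_mem _ hr)))
    refine ⟨P' + P, ?_, ?_, ?_, ?_⟩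
    · rw [Multiset.card_add, h1, k1, Multiset.card_cons]; ring
    · obtain ⟨x, y⟩ := p
      rw [both_add, k2, h2, both_cons, jn_cons, jn_cons, add_assoc]
    · intro r hr
      rcases Multiset.mem_add.1 hr with hr | hr
      · refine ⟨k3 r hr, ?_⟩
        rw [← QuotientAddGroup.eq_zero_iff, QuotientAddGroup.mk_sub, hq1 r hr, hq2 r hr, sub_self]
      · exact h3 r hr
    · rw [Multiset.map_add, Multiset.sum_add]
      refine C.add_mem ?_ h4
      apply blk_sum hm (q := p.1.fib) (by rw [Multiset.card_map, k1])
      intro x hx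
      obtain ⟨r, hr, rfl⟩ := Multiset.mem_map.1 hx
      exact hq1 r hr

variable [Fintype C] [Fintype (G ⧸ C)]

theorem caseI (hm : ∀ g : G, m • g ∈ C) {𝔅 : Multiset (Blk C m)}
    (hmax : ∀ 𝔅' : Multiset (Blk C m), jn 𝔅' = jn 𝔅 → Multiset.card (𝔅'.filter Blk.Const)
        ≤ Multiset.card (𝔅.filter Blk.Const))
    (hZ : NoWin (𝔅.map Blk.val)) (hst : Star (𝔅.map Blk.val)) {c : C}
    (hcount : Nat.card C ≤ (𝔅.map Blk.val).count c)
    (hnc : ∀ b ∈ 𝔅, b.val = c → ¬ b.Const) {l h : ℕ}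
    (hl : Multiset.card 𝔅 = 2 * Nat.card C + l) (hk : Fintype.card (G ⧸ C) = m * h)
    (hm2 : 2 ≤ m) (h1 : 1 ≤ h) (hn : 2 * m * h + 2 * h ≤ Nat.card C)
    (hl' : Nat.card C ≤ l + (m - 1) * h) :
    ∃ T ≤ jn 𝔅, Multiset.card T = 2 * (m * Nat.card C) ∧ T.sum = 0 := by
  have hmh : (m - 1) * h + h = m * h := by
    obtain ⟨m', rfl⟩ : ∃ m', m = m' + 1 := ⟨m - 1, by omega⟩
    simp; ring
  have hmh2 : 2 * h ≤ m * h := Nat.mul_le_mul_right h hm2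
  rw [mul_assoc] at hn
  have hcc : Multiset.card (𝔅.filter fun b => b.val = c) = (𝔅.map Blk.val).count c := by
    rw [Multiset.count_map]
    congr 1
    exact Multiset.filter_congr fun x _ => eq_comm
  obtain ⟨PP, hPc, hPP, hPf⟩ := same_pairs Blk.fib h (𝔅.filter fun b => b.val = c) (by
    rw [hk, hcc]; omega)
  obtain ⟨𝔅2, h𝔅2⟩ := exists_rest (hPP.trans (Multiset.filter_le _ _))
  have hPPc : ∀ b ∈ both PP, b.val = c ∧ b ∈ 𝔅 := fun b hb => by
    have := Multiset.mem_filter.1 (Multiset.mem_of_le hPP hb)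
    exact ⟨this.2, this.1⟩
  obtain ⟨P0, hP0c, hP0b, hP0d, hP0s⟩ := pairs_of hm PP (by
    intro p hp
    refine ⟨hPf p hp, ?_⟩
    obtain ⟨x, y⟩ := p
    obtain ⟨PP', hPP'⟩ := Multiset.exists_cons_of_mem hp
    have hx := hPPc x (Multiset.mem_add.2 (Or.inl (Multiset.mem_map_of_mem Prod.fst hp)))
    have hy := hPPc y (Multiset.mem_add.2 (Or.inr (Multiset.mem_map_of_mem Prod.snd hp)))
    refine count_small hm hmax (R := both PP' + 𝔅2) ?_ (hnc x hx.2 hx.1) (hnc y hy.2 hy.1)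
      (hPf _ hp)
    conv_lhs => rw [h𝔅2]
    rw [hPP', both_cons, Multiset.cons_add, Multiset.cons_add])
  rw [hPc] at hP0c
  obtain ⟨Δ, hΔ⟩ : ∃ Δ : Multiset C, Δ.map (fun x : C => (x : G)) = diffs P0 := by
    have : ∀ x ∈ diffs P0, x ∈ C := by
      intro x hx
      obtain ⟨p, hp, rfl⟩ := Multiset.mem_map.1 hx
      exact (hP0d p hp).2
    lift diffs P0 to Multiset C using this with Δ hΔ
    exact ⟨Δ, rfl⟩
  have hΔ0 : ∀ x ∈ Δ, x ≠ 0 := by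
    rintro x hx rfl
    have : (0 : G) ∈ diffs P0 := by
      rw [← hΔ]; exact Multiset.mem_map.2 ⟨0, hx, rfl⟩
    obtain ⟨p, hp, he⟩ := Multiset.mem_map.1 this
    exact (hP0d p hp).1 (sub_eq_zero.1 he).symm
  have hΔc : Multiset.card Δ = m * h := by
    have := congrArg Multiset.card hΔ
    rwa [Multiset.card_map, card_diffs, hP0c] at this
  set Z := 𝔅.map Blk.val with hZd
  set Z2 := 𝔅2.map Blk.val with hZ2
  have hZs : Z = Multiset.replicate (2 * h) c + Z2 := by
    rw [hZd, h𝔅2, Multiset.map_add]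
    congr 1
    rw [Multiset.eq_replicate]
    refine ⟨by rw [Multiset.card_map, card_both, hPc], ?_⟩
    intro b hb
    obtain ⟨B, hB, rfl⟩ := Multiset.mem_map.1 hb
    exact (hPPc B hB).1
  have hZc : Multiset.card Z = 2 * Nat.card C + l := by rw [hZd, Multiset.card_map, hl]
  have hZ2c : Multiset.card Z2 + 2 * h = 2 * Nat.card C + l := by
    rw [← hZc, hZs, Multiset.card_add, Multiset.card_replicate]; ring
  have hcnt2 : Z.count c = 2 * h + Z2.count c := by
    rw [hZs, Multiset.count_add, Multiset.count_replicate_self]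
  have hclt : Z.count c < 2 * Nat.card C := by
    by_contra! hge
    apply hZ (Multiset.replicate (2 * Nat.card C) c) (Multiset.le_count_iff_replicate_le.1 hge)
      (by simp)
    rw [Multiset.sum_replicate, mul_comm, mul_smul, Nat.card_eq_fintype_card,
      card_nsmul_eq_zero]
  have hs2 := split_count Z2 c
  have hs2c := congrArg Multiset.card hs2
  rw [Multiset.card_add, Multiset.card_replicate] at hs2c
  set A0 := sums {0} Δ with hA0
  set E := (Z2.filter fun z => z ≠ c).map (fun z => z - c) with hE
  have hEc : Multiset.card E = Multiset.card (Z2.filter fun z => z ≠ c) := by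
    rw [hE, Multiset.card_map]
  have hE0 : ∀ x ∈ E, x ≠ 0 := by
    intro x hx
    obtain ⟨z, hz, rfl⟩ := Multiset.mem_map.1 hx
    exact sub_ne_zero.2 (Multiset.mem_filter.1 hz).2
  have hu : sums A0 E = Finset.univ := by
    by_cases hb : stab (sums A0 E) = ⊥
    · exfalso
      have hK := K {0} (Δ + E) (by simp) ⊥ (by rw [sums_add, ← hA0]; exact hb)
      rw [sums_add, ← hA0] at hK
      have hf : (Δ + E).filter (fun x => x ∉ (⊥ : AddSubgroup C)) = Δ + E := by
        rw [Multiset.filter_eq_self]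
        intro x hx
        rw [AddSubgroup.mem_bot]
        rcases Multiset.mem_add.1 hx with hx | hx
        · exact hΔ0 x hx
        · exact hE0 x hx
      rw [hf, Nat.card_unique, Multiset.card_add] at hK
      have hle := Finset.card_le_univ (sums A0 E)
      rw [← Nat.card_eq_fintype_card] at hle
      omega
    · refine star_use hst A0 ⟨0, zero_mem_sums _⟩ E c ?_ hb
      rintro Q -
      have hEf : Multiset.card (E.filter (· ∉ Q))
          = Multiset.card (Z2.filter fun z => z - c ∉ Q ∧ z ≠ c) := by
        rw [hE, Multiset.filter_map, Multiset.card_map, Multiset.filter_filter]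
        rfl
      rw [hEf, hZs, Multiset.filter_add]
      have h0 : (Multiset.replicate (2 * h) c).filter (fun z => z - c ∉ Q) = 0 := by
        rw [Multiset.filter_eq_nil]
        intro z hz; rw [Multiset.eq_of_mem_replicate hz]; simp
      rw [h0, zero_add]
      apply Multiset.card_le_card
      apply Multiset.monotone_filter_right
      intro z hz
      refine ⟨hz, ?_⟩
      rintro rfl
      simp at hz
  obtain ⟨E', hE', hsE', hE'c⟩ : ∃ E' ≤ E, sums A0 E' = Finset.univ ∧
      Multiset.card E' + m * h ≤ Nat.card C := by
    by_cases hb : stab A0 = ⊥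
    · obtain ⟨E', g1, g2, g3⟩ := KL A0 ⊥ bot_le E
      refine ⟨E', g1, g2.trans hu, ?_⟩
      have hK := K {0} Δ (by simp) ⊥ hb
      have hf : Δ.filter (fun x => x ∉ (⊥ : AddSubgroup C)) = Δ := by
        rw [Multiset.filter_eq_self]
        intro x hx
        rw [AddSubgroup.mem_bot]
        exact hΔ0 x hx
      rw [hf, Nat.card_unique, ← hA0] at hK
      rw [hu, Finset.card_univ, ← Nat.card_eq_fintype_card, Nat.card_unique] at g3
      omega
    · obtain ⟨E', g1, g2, g3⟩ := KL A0 (stab A0) le_rfl E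
      refine ⟨E', g1, g2.trans hu, ?_⟩
      rw [hu, Finset.card_univ, ← Nat.card_eq_fintype_card] at g3
      have e2 : Nat.card (stab A0) ≠ 1 := fun h2 => hb (AddSubgroup.eq_bot_of_card_eq _ h2)
      have hp : 0 < Nat.card (stab A0) := Nat.card_pos
      have := Nat.mul_le_mul_right (Multiset.card E') (by omega : 2 ≤ Nat.card (stab A0))
      omega
  obtain ⟨X, hX, rfl⟩ := lift_le _ _ _ hE'
  rw [Multiset.card_map] at hE'c
  obtain ⟨δ, hδ, T, hT, hTc, hTs⟩ := cover A0 Z2 (X.map fun x => (c, x)) (by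
      rw [both, Multiset.map_map, Multiset.map_map]
      simp only [Function.comp_def, Multiset.map_const', Multiset.map_id']
      rw [hs2]
      refine add_le_add (Multiset.le_count_iff_replicate_le.1 ?_) hX
      rw [Multiset.count_replicate_self]
      omega) (by
      intro x
      have : diffs (X.map fun x => (c, x)) = X.map fun z => z - c := by
        simp [diffs, Multiset.map_map, Function.comp_def]
      rw [this, hsE']
      exact Finset.mem_univ x) (r := 2 * Nat.card C - h) (by rw [Multiset.card_map]; omega)
    (by rw [Multiset.card_map]; omega) (-⟨_, hP0s⟩)
  obtain ⟨𝔗, h𝔗, rfl⟩ := lift_le _ _ _ hT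
  rw [Multiset.card_map] at hTc
  obtain ⟨z, hz, F, hF, rfl⟩ := mem_sums.1 hδ
  rw [Finset.mem_singleton] at hz
  subst hz
  rw [zero_add] at hTs
  obtain ⟨F', hF', hF'm⟩ := lift_le (fun p : G × G => p.2 - p.1) P0 (F.map fun x : C => (x : G)) (by
    have := Multiset.map_le_map (f := fun x : C => (x : G)) hF
    rw [hΔ] at this
    exact this)
  obtain ⟨U, hU, hUc, hUs⟩ := pair_sel P0 F' hF'
  refine ⟨U + jn 𝔗, ?_, ?_, ?_⟩
  · rw [h𝔅2, jn_add, ← hP0b]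
    exact add_le_add hU (jn_mono h𝔗)
  · rw [Multiset.card_add, hUc, hP0c, card_jn, hTc, ← mul_add, ← mul_assoc, mul_comm 2 m, mul_assoc]
    congr 1
    omega
  · have hFs : (diffs F').sum = ((F.sum : C) : G) := by
      rw [diffs, hF'm]
      exact (map_multiset_sum C.subtype F).symm
    rw [Multiset.sum_add, hUs, sum_jn, hFs]
    have := congrArg (fun x : C => (x : G)) hTs
    simp only [AddSubgroup.coe_add, AddSubgroup.coe_neg] at this
    rw [add_assoc, add_comm ((F.sum : C) : G), this]
    abel

end

end Dav

end Part9

section Part10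

open scoped Classical Pointwise

namespace Dav

section

variable {G : Type*} [AddCommGroup G] {C : AddSubgroup G} {m : ℕ}

/-- maximal relative zero-sum part -/
theorem rel_part {D : ℕ} (hD : ∀ S : Multiset G, D ≤ Multiset.card S → ∃ T ≤ S, T ≠ 0 ∧ T.sum = 0)
    (W : Multiset G) (g : G) :
    ∃ P ≤ W, P.sum = Multiset.card P • g ∧ Multiset.card W < Multiset.card P + D := by
  obtain ⟨P, ⟨hP, hs⟩, hmax⟩ := exists_max
    (fun P : Multiset G => P ≤ W ∧ P.sum = Multiset.card P • g) (fun P => Multiset.card P)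
    (Multiset.card W) ⟨0, Multiset.zero_le _, by simp⟩ (fun P h => Multiset.card_le_card h.1)
  refine ⟨P, hP, hs, ?_⟩
  obtain ⟨R, rfl⟩ := exists_rest hP
  by_contra! hge
  rw [Multiset.card_add] at hge
  obtain ⟨T, hT, hT0, hTs⟩ := hD (R.map fun z => z - g) (by rw [Multiset.card_map]; omega)
  obtain ⟨T', hT', rfl⟩ := lift_le _ _ _ hT
  rw [sum_map_sub_const, sub_eq_zero] at hTs
  have := hmax (P + T') ⟨add_le_add le_rfl hT', by
    rw [Multiset.sum_add, hs, hTs, Multiset.card_add, add_smul]⟩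
  rw [Multiset.card_add] at this
  apply hT0
  rw [Multiset.card_eq_zero.1 (by omega : Multiset.card T' = 0)]
  rfl

variable [Fintype C]

theorem caseII {D : ℕ}
    (hD : ∀ S : Multiset G, D ≤ Multiset.card S → ∃ T ≤ S, T ≠ 0 ∧ T.sum = 0)
    {𝔅 : Multiset (Blk C m)} {L : Multiset G} {h a j : ℕ} {c c' : C} {E : Multiset C}
    (hsh : 𝔅.map Blk.val = Multiset.replicate a c + Multiset.replicate (Nat.card C * j) c' + E)
    (ha : Nat.card C ≤ a) (hE : 2 * Multiset.card E + 4 ≤ 3 * Nat.card C)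
    (hL : Multiset.card L ≤ (m - 1) * (m * h)) (hn : 2 * m * h + 2 * h ≤ Nat.card C)
    (hm2 : 2 ≤ m) {b : Blk C m} (hb : b ∈ 𝔅) {g : G} (hbg : b.1 = Multiset.replicate m g)
    (hbc : b.val = c)
    (hS : 2 * (m * Nat.card C) + D ≤ Multiset.card (jn 𝔅 + L) + 1) :
    ∃ T ≤ jn 𝔅 + L, Multiset.card T = 2 * (m * Nat.card C) ∧ T.sum = 0 := by
  set n := Nat.card C with hnd
  have hn0 : 0 < n := Nat.card_pos
  obtain ⟨a', rfl⟩ : ∃ a', a = a' + 1 := ⟨a - 1, by omega⟩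
  obtain ⟨𝔅', rfl⟩ := Multiset.exists_cons_of_mem hb
  rw [Multiset.map_cons, hbc, Multiset.replicate_succ, Multiset.cons_add, Multiset.cons_add,
    Multiset.cons_inj_right] at hsh
  obtain ⟨𝔅1, 𝔅E, rfl, hsh1, hshE⟩ := map_eq_add' hsh
  obtain ⟨𝔅a, 𝔅j, rfl, hsha, hshj⟩ := map_eq_add' hsh1
  have ca := congrArg Multiset.card hsha
  have cj := congrArg Multiset.card hshj
  have cE := congrArg Multiset.card hshE
  simp only [Multiset.card_map, Multiset.card_replicate] at ca cj cE
  have hcg : (c : G) = m • g := by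
    rw [← hbc]
    change b.1.sum = _
    rw [hbg, Multiset.sum_replicate]
  have hcn : ∀ x : C, n • x = 0 := by
    intro x
    rw [hnd, Nat.card_eq_fintype_card, card_nsmul_eq_zero]
  have hNg : (m * n) • g = 0 := by
    rw [mul_comm, mul_smul, ← hcg, ← AddSubgroup.coe_nsmul, hcn]; rfl
  obtain ⟨P, hP, hPs, hPc⟩ := rel_part hD (jn 𝔅E + L) g
  have hWc : Multiset.card (jn 𝔅E + L) ≤ 2 * (m * n) := by
    rw [Multiset.card_add, card_jn, cE]
    have e1 : (m - 1) * (m * h) ≤ m * (m * h) := Nat.mul_le_mul_right _ (by omega)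
    have e2 : m * (2 * Multiset.card E + 4) ≤ m * (3 * n) := Nat.mul_le_mul_left _ hE
    have e3 : m * (2 * m * h + 2 * h) ≤ m * n := Nat.mul_le_mul_left _ hn
    have e4 : m * (2 * m * h + 2 * h) = 2 * (m * (m * h)) + 2 * (m * h) := by ring
    have e5 : m * (2 * Multiset.card E + 4) = 2 * (m * Multiset.card E) + 4 * m := by ring
    have e6 : m * (3 * n) = 3 * (m * n) := by ring
    omega
  have hPle := Multiset.card_le_card hP
  have htot : Multiset.card (jn (b ::ₘ (𝔅a + 𝔅j + 𝔅E)) + L)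
      = m + m * a' + (m * n) * j + Multiset.card (jn 𝔅E + L) := by
    simp only [jn_cons, jn_add, Multiset.card_add, card_jn, ca, cj, cE, b.2.1]
    ring
  rw [htot] at hS
  have htot' : 2 * (m * n) ≤ Multiset.card P + m + m * a' + (m * n) * j := by omega
  have hN0 : 0 < m * n := Nat.mul_pos (by omega) hn0
  obtain ⟨i, hij, r1, hr1, hr1'⟩ : ∃ i ≤ j, ∃ r1, Multiset.card P + (m * n) * i + r1 = 2 * (m * n) ∧
      r1 ≤ m * a' + m := by
    by_cases hj : j ≤ (2 * (m * n) - Multiset.card P) / (m * n)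
    · have e1 := Nat.mul_le_mul_left (m * n) hj
      have e2 := Nat.mul_div_le (2 * (m * n) - Multiset.card P) (m * n)
      exact ⟨j, le_rfl, 2 * (m * n) - Multiset.card P - (m * n) * j, by omega, by omega⟩
    · have e2 := Nat.div_add_mod (2 * (m * n) - Multiset.card P) (m * n)
      have e3 := Nat.mod_lt (2 * (m * n) - Multiset.card P) hN0
      have e4 : m * n ≤ m * (a' + 1) := Nat.mul_le_mul_left _ ha
      rw [mul_add, mul_one] at e4
      exact ⟨_, (not_le.1 hj).le, (2 * (m * n) - Multiset.card P) % (m * n), by omega, by omega⟩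
  obtain ⟨i', hi', i'', hi'', hr⟩ : ∃ i' ≤ a', ∃ i'' ≤ m, m * i' + i'' = r1 := by
    by_cases hj : a' ≤ r1 / m
    · have e1 := Nat.mul_le_mul_left m hj
      have e2 := Nat.mul_div_le r1 m
      exact ⟨a', le_rfl, r1 - m * a', by omega, by omega⟩
    · exact ⟨r1 / m, (not_le.1 hj).le, r1 % m, (Nat.mod_lt _ (by omega)).le, Nat.div_add_mod _ _⟩
  obtain ⟨𝔗a, hTa, hTac⟩ := exists_le_card 𝔅a (r := i') (by omega)
  obtain ⟨𝔗j, hTj, hTjc⟩ := exists_le_card 𝔅j (r := n * i) (by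
    rw [cj]; exact Nat.mul_le_mul_left _ hij)
  have hva : 𝔗a.map Blk.val = Multiset.replicate i' c := by
    rw [Multiset.eq_replicate]
    refine ⟨by rw [Multiset.card_map, hTac], fun x hx => ?_⟩
    apply Multiset.eq_of_mem_replicate (n := a')
    rw [← hsha]
    exact Multiset.mem_of_le (Multiset.map_le_map hTa) hx
  have hvj : 𝔗j.map Blk.val = Multiset.replicate (n * i) c' := by
    rw [Multiset.eq_replicate]
    refine ⟨by rw [Multiset.card_map, hTjc], fun x hx => ?_⟩
    apply Multiset.eq_of_mem_replicate (n := n * j)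
    rw [← hshj]
    exact Multiset.mem_of_le (Multiset.map_le_map hTj) hx
  refine ⟨Multiset.replicate i'' g + (jn 𝔗a + jn 𝔗j + P), ?_, ?_, ?_⟩
  · rw [jn_cons, jn_add, jn_add, add_assoc b.1, add_assoc (jn 𝔅a + jn 𝔅j), hbg]
    refine add_le_add ?_ (add_le_add (add_le_add (jn_mono hTa) (jn_mono hTj)) hP)
    exact Multiset.replicate_mono g hi''
  · simp only [Multiset.card_add, Multiset.card_replicate, card_jn, hTac, hTjc]
    rw [← hr1, ← hr]
    ring
  · simp only [Multiset.sum_add, sum_jn, hva, hvj, Multiset.sum_replicate, hPs]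
    have e1 : (n * i) • c' = 0 := by rw [mul_comm, mul_smul, hcn, smul_zero]
    rw [e1, AddSubgroup.coe_nsmul, hcg, AddSubgroup.coe_zero, add_zero, ← mul_smul,
      ← add_smul, ← add_smul]
    have e2 : (i'' + (i' * m + Multiset.card P)) • g + (i * (m * n)) • g
        = (2 * (m * n)) • g := by
      rw [← add_smul, ← hr1, ← hr]; congr 1; ring
    rw [mul_smul i, hNg, smul_zero, add_zero, mul_smul 2, hNg, smul_zero] at e2
    exact e2

variable [Fintype (G ⧸ C)] [IsAddCyclic C]

theorem egz_blocks (hm : ∀ g : G, m • g ∈ C) (hm1 : 1 ≤ m) (S : Multiset G) (j : ℕ)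
    (hS : m * (j * Nat.card C + Nat.card C - 1) + (m - 1) * Fintype.card (G ⧸ C)
      ≤ Multiset.card S) :
    ∃ T ≤ S, Multiset.card T = j * (m * Nat.card C) ∧ T.sum = 0 := by
  obtain ⟨𝔅, L, rfl, hL⟩ := decompose hm hm1 S
  rw [Multiset.card_add, card_jn] at hS
  have h1 : j * Nat.card C + Nat.card C - 1 ≤ Multiset.card 𝔅 :=
    le_of_mul_le_mul_left (by omega : m * _ ≤ m * _) (by omega)
  obtain ⟨t, ht, htc, hts⟩ := egz_cyc_mul inferInstance j (𝔅.map Blk.val)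
    (by rw [Multiset.card_map]; exact h1)
  obtain ⟨𝔗, h𝔗, rfl⟩ := lift_le _ _ _ ht
  rw [Multiset.card_map] at htc
  refine ⟨jn 𝔗, (jn_mono h𝔗).trans (Multiset.le_add_right _ _), ?_, ?_⟩
  · rw [card_jn, htc]; ring
  · rw [sum_jn, hts]; rfl

theorem core2 (hm : ∀ g : G, m • g ∈ C) {D h : ℕ}
    (hD : ∀ S : Multiset G, D ≤ Multiset.card S → ∃ T ≤ S, T ≠ 0 ∧ T.sum = 0)
    (hDN : m * Nat.card C + 1 ≤ D)
    (hk : Fintype.card (G ⧸ C) = m * h)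
    (hm2 : 2 ≤ m) (h1 : 1 ≤ h) (hn : 2 * m * h + 2 * h ≤ Nat.card C)
    (S : Multiset G) (hS : 2 * (m * Nat.card C) + D ≤ Multiset.card S + 1) :
    ∃ T ≤ S, Multiset.card T = 2 * (m * Nat.card C) ∧ T.sum = 0 := by
  by_contra hno
  obtain ⟨𝔅, L, rfl, hL, hmax⟩ := exists_best hm (by omega) S
  have hwin : ∀ 𝔗 ≤ 𝔅, Multiset.card 𝔗 = 2 * Nat.card C → (𝔗.map Blk.val).sum = 0 → False := by
    intro 𝔗 h𝔗 hc hs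
    apply hno
    refine ⟨jn 𝔗, (jn_mono h𝔗).trans (Multiset.le_add_right _ _), ?_, ?_⟩
    · rw [card_jn, hc]; ring
    · rw [sum_jn, hs]; rfl
  have hZ : NoWin (𝔅.map Blk.val) := by
    intro T hT hc hs
    obtain ⟨𝔗, h𝔗, rfl⟩ := lift_le _ _ _ hT
    rw [Multiset.card_map] at hc
    exact hwin 𝔗 h𝔗 hc hs
  rw [hk] at hL
  have hmh : (m - 1) * h + h = m * h := by
    obtain ⟨m', rfl⟩ : ∃ m', m = m' + 1 := ⟨m - 1, by omega⟩
    simp; ring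
  have hS' := hS
  rw [Multiset.card_add, card_jn] at hS'
  have hM1 : 3 * Nat.card C ≤ Multiset.card 𝔅 + (m - 1) * h := by
    apply le_of_mul_le_mul_left (a := m) _ (by omega)
    have e1 : m * (3 * Nat.card C) = 3 * (m * Nat.card C) := by ring
    have e2 : m * (Multiset.card 𝔅 + (m - 1) * h)
      = m * Multiset.card 𝔅 + (m - 1) * (m * h) := by ring
    omega
  have hM2 : Multiset.card 𝔅 + 2 ≤ 3 * Nat.card C := by
    by_contra hlt
    obtain ⟨t, ht, htc, hts⟩ := egz_cyc_mul inferInstance 2 (𝔅.map Blk.val)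
      (by rw [Multiset.card_map]; omega)
    exact hZ t ht htc hts
  rw [mul_assoc] at hn
  obtain ⟨l, hl⟩ : ∃ l, Multiset.card 𝔅 = 2 * Nat.card C + l :=
    ⟨Multiset.card 𝔅 - 2 * Nat.card C, by omega⟩
  have hlZ : Multiset.card (𝔅.map Blk.val) = 2 * Nat.card C + l := by
    rw [Multiset.card_map, hl]
  have hst := star_of_noWin hZ hlZ (by omega)
  obtain ⟨c, c', a, j, E, hsh, ha, hE⟩ := Zmain hZ hlZ (by omega) (by omega)
  by_cases hc : ∃ b ∈ 𝔅, b.val = c ∧ b.Const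
  · obtain ⟨b, hb, hbc, g, hg⟩ := hc
    exact hno (caseII hD hsh ha hE hL (by rw [mul_assoc]; exact hn) hm2 hb hg hbc hS)
  · push Not at hc
    obtain ⟨T, hT, hTc, hTs⟩ := caseI hm hmax hZ hst (c := c) (by
      rw [hsh]
      simp only [Multiset.count_add, Multiset.count_replicate_self]
      omega) hc hl hk hm2 h1 (by rw [mul_assoc]; exact hn) (by omega)
    exact hno ⟨T, hT.trans (Multiset.le_add_right _ _), hTc, hTs⟩

theorem core (hm : ∀ g : G, m • g ∈ C) {D h : ℕ}
    (hD : ∀ S : Multiset G, D ≤ Multiset.card S → ∃ T ≤ S, T ≠ 0 ∧ T.sum = 0)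
    (hDN : m * Nat.card C + 1 ≤ D)
    (hk : Fintype.card (G ⧸ C) = m * h)
    (hm2 : 2 ≤ m) (h1 : 1 ≤ h) (hn : 2 * m * h + 2 * h ≤ Nat.card C) (k : ℕ) (hk2 : 2 ≤ k)
    (S : Multiset G) (hS : k * (m * Nat.card C) + D ≤ Multiset.card S + 1) :
    ∃ T ≤ S, Multiset.card T = k * (m * Nat.card C) ∧ T.sum = 0 := by
  induction k, hk2 using Nat.le_induction generalizing S with
  | base => exact core2 hm hD hDN hk hm2 h1 hn S hS
  | succ k hk2 ih =>
    obtain ⟨T, hT, hTc, hTs⟩ := egz_blocks hm (by omega) S 1 (by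
      rw [hk]
      have e1 : (m - 1) * (m * h) ≤ m * (m * h) := Nat.mul_le_mul_right _ (by omega)
      have e3 : m * (2 * m * h + 2 * h) ≤ m * Nat.card C := Nat.mul_le_mul_left _ hn
      have e4 : m * (2 * m * h + 2 * h) = 2 * (m * (m * h)) + 2 * (m * h) := by ring
      have e5 : m * (1 * Nat.card C + Nat.card C - 1) ≤ m * (2 * Nat.card C) :=
        Nat.mul_le_mul_left _ (by omega)
      have e6 : m * (2 * Nat.card C) = 2 * (m * Nat.card C) := by ring
      have e7 : 3 * (m * Nat.card C) ≤ (k + 1) * (m * Nat.card C) :=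
        Nat.mul_le_mul_right _ (by omega)
      omega)
    obtain ⟨R, rfl⟩ := exists_rest hT
    rw [Multiset.card_add, hTc, add_mul] at hS
    obtain ⟨T', hT', hTc', hTs'⟩ := ih R (by omega)
    refine ⟨T + T', add_le_add le_rfl hT', ?_, ?_⟩
    · rw [Multiset.card_add, hTc, hTc']; ring
    · rw [Multiset.sum_add, hTs, hTs', add_zero]

end

end Dav

end Part10

namespace Dav

section final

open scoped Classical

theorem oneProd_iff {G : Type*} [CommGroup G] (T : Multiset G) : IsOneProdSeq T ↔ T.prod = 1 := by
  constructor
  · rintro ⟨l, rfl, h⟩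
    rw [Multiset.prod_coe]; exact h
  · intro h
    refine ⟨T.toList, T.coe_toList, ?_⟩
    rw [← Multiset.prod_coe, T.coe_toList]; exact h

theorem le_rep {α : Type*} {T : Multiset α} {b : ℕ} {x : α} (h : T ≤ Multiset.replicate b x) :
    T = Multiset.replicate (Multiset.card T) x := by
  rw [Multiset.eq_replicate]
  exact ⟨rfl, fun y hy => Multiset.eq_of_mem_replicate (Multiset.mem_of_le h hy)⟩

theorem ofMul_sum {X : Type*} [CommGroup X] (S : Multiset X) :
    (S.map Additive.ofMul).sum = Additive.ofMul S.prod := by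
  induction S using Multiset.induction_on with
  | empty => simp
  | cons x S ih => rw [Multiset.map_cons, Multiset.sum_cons, ih, Multiset.prod_cons, ofMul_mul]

variable {H : Type*} [CommGroup H] [Fintype H]

theorem D_lower {N D : ℕ} (hN : 0 < N) (hH : Nontrivial H)
    (hD : ∀ S : Multiset (Multiplicative (ZMod N) × H),
        D ≤ Multiset.card S → ∃ T, T ≤ S ∧ T ≠ 0 ∧ T.prod = 1) : N + 1 ≤ D := by
  by_contra hlt
  obtain ⟨h0, hh0⟩ := exists_ne (1 : H)
  obtain ⟨T, hT, hT0, hTp⟩ := hD (((1 : Multiplicative (ZMod N)), h0) ::ₘ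
    Multiset.replicate (N - 1) (Multiplicative.ofAdd (1 : ZMod N), (1 : H)))
    (by rw [Multiset.card_cons, Multiset.card_replicate]; omega)
  by_cases hmem : ((1 : Multiplicative (ZMod N)), h0) ∈ T
  · obtain ⟨T', rfl⟩ := Multiset.exists_cons_of_mem hmem
    rw [Multiset.cons_le_cons_iff] at hT
    have := congrArg Prod.snd hTp
    rw [le_rep hT] at this
    simp at this
    exact hh0 this
  · rw [Multiset.le_cons_of_notMem hmem] at hT
    have hc := Multiset.card_le_card hT
    rw [Multiset.card_replicate] at hc
    have h1 := congrArg Prod.fst hTp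
    rw [le_rep hT] at h1
    have hpos : 0 < Multiset.card T := Multiset.card_pos.2 hT0
    simp only [Multiset.prod_replicate, Prod.pow_fst, Prod.fst_one] at h1
    have h2 : ((Multiset.card T : ℕ) : ZMod N) = 0 := by
      have := congrArg Multiplicative.toAdd h1
      simpa using this
    rw [ZMod.natCast_eq_zero_iff] at h2
    have := Nat.le_of_dvd hpos h2
    omega

theorem upper {m n k D : ℕ} (hexp : Monoid.exponent H = m) (hm : 2 ≤ m)
    (hn : 2 * m * Fintype.card H + 2 * Fintype.card H ≤ n) (hk : 2 ≤ k)
    (hD : ∀ S : Multiset (Multiplicative (ZMod (m * n)) × H),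
        D ≤ Multiset.card S → ∃ T, T ≤ S ∧ T ≠ 0 ∧ T.prod = 1)
    (hDN : m * n + 1 ≤ D)
    (S : Multiset (Multiplicative (ZMod (m * n)) × H))
    (hS : k * (m * n) + D ≤ Multiset.card S + 1) :
    ∃ T ≤ S, Multiset.card T = k * (m * n) ∧ T.prod = 1 := by
  have hH : 0 < Fintype.card H := Fintype.card_pos
  have hn0 : 0 < n := by
    have : 0 < 2 * Fintype.card H := by omega
    omega
  have hN : 0 < m * n := Nat.mul_pos (by omega) hn0
  haveI : NeZero (m * n) := ⟨hN.ne'⟩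
  have hpow : ∀ y : H, y ^ m = 1 := by
    subst hexp
    exact fun y => Monoid.pow_exponent_eq_one y
  let X := Multiplicative (ZMod (m * n)) × H
  let x : X := (Multiplicative.ofAdd ((m : ℕ) : ZMod (m * n)), 1)
  let C : AddSubgroup (Additive X) := AddSubgroup.zmultiples (Additive.ofMul x)
  haveI : Fintype (Multiplicative (ZMod (m * n))) := inferInstance
  haveI : Finite (Additive X) := inferInstance
  haveI : Fintype (Additive X) := Fintype.ofFinite _
  haveI : Fintype C := Fintype.ofFinite _
  haveI : Fintype (Additive X ⧸ C) := Fintype.ofFinite _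
  haveI : IsAddCyclic C := inferInstance
  have hC : Nat.card C = n := by
    rw [Nat.card_zmultiples, addOrderOf_ofMul_eq_orderOf, Prod.orderOf]
    simp only [x, orderOf_one, Nat.lcm_one_right]
    rw [orderOf_ofAdd_eq_addOrderOf, ZMod.addOrderOf_coe _ hN.ne', Nat.gcd_comm,
      Nat.gcd_eq_left (Dvd.intro _ rfl), Nat.mul_div_cancel_left _ (by omega)]
  have hq : Fintype.card (Additive X ⧸ C) = m * Fintype.card H := by
    have := AddSubgroup.card_eq_card_quotient_mul_card_addSubgroup C
    rw [hC] at this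
    have e : Nat.card (Additive X) = m * n * Fintype.card H := by
      rw [show Nat.card (Additive X) = Nat.card X from rfl, Nat.card_prod,
        show Nat.card (Multiplicative (ZMod (m * n))) = Nat.card (ZMod (m * n)) from rfl,
        Nat.card_zmod, Nat.card_eq_fintype_card]
    rw [e, Nat.card_eq_fintype_card] at this
    apply Nat.eq_of_mul_eq_mul_right hn0
    rw [← this]; ring
  have hmC : ∀ g : Additive X, m • g ∈ C := by
    intro g
    refine AddSubgroup.mem_zmultiples_iff.2 ⟨((Multiplicative.toAdd (Additive.toMul g).1).val : ℤ), ?_⟩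
    rw [natCast_zsmul]
    apply Additive.toMul.injective
    rw [toMul_nsmul, toMul_nsmul]
    apply Prod.ext
    · rw [Prod.pow_fst, Prod.pow_fst]
      apply Multiplicative.toAdd.injective
      rw [toAdd_pow, toAdd_pow]
      simp only [x, toMul_ofMul, toAdd_ofAdd, nsmul_eq_mul]
      rw [ZMod.natCast_zmod_val]
      exact mul_comm _ _
    · rw [Prod.pow_snd, Prod.pow_snd]
      simp only [x, toMul_ofMul, one_pow]
      exact (hpow _).symm
  obtain ⟨T, hT, hTc, hTs⟩ := core (C := C) (m := m) hmC (D := D) (h := Fintype.card H) (by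
      intro S hS
      obtain ⟨T, h1, h2, h3⟩ := hD (S.map Additive.toMul) (by rw [Multiset.card_map]; exact hS)
      obtain ⟨T', h4, rfl⟩ := lift_le _ _ _ h1
      refine ⟨T', h4, ?_, ?_⟩
      · rintro rfl; exact h2 rfl
      · have := ofMul_sum (T'.map Additive.toMul)
        rw [Multiset.map_map, h3] at this
        simpa [Function.comp_def] using this) (by rw [hC]; exact hDN) hq hm hH
      (by rw [hC]; exact hn) k hk (S.map Additive.ofMul)
      (by rw [hC, Multiset.card_map]; exact hS)
  obtain ⟨T', h4, rfl⟩ := lift_le _ _ _ hT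
  rw [Multiset.card_map, hC] at hTc
  refine ⟨T', h4, hTc, ?_⟩
  rw [ofMul_sum] at hTs
  exact hTs

end final

end Dav

/-- Let `H` be a finite abelian group with exponent `m ≥ 2`, let `n ≥ 2m|H| + 2|H|`,
and let `G = C_{mn} ⊕ H`.  Then for every `k ≥ 2`, `s_{kmnℕ}(G) = kmn + D(G) − 1`,
where `D` is the Davenport constant of `G`. -/
theorem stmt2 (H : Type*) [CommGroup H] [Fintype H] (m n : ℕ)
    (hexp : Monoid.exponent H = m) (hm : 2 ≤ m)
    (hn : 2 * m * Fintype.card H + 2 * Fintype.card H ≤ n)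
    (k : ℕ) (hk : 2 ≤ k) (D : ℕ)
    (hD : IsLeast {ℓ : ℕ | ∀ S : Multiset (Multiplicative (ZMod (m * n)) × H),
        ℓ ≤ Multiset.card S → ∃ T, T ≤ S ∧ T ≠ 0 ∧ IsOneProdSeq T} D) :
    IsLeast {ℓ : ℕ | ∀ S : Multiset (Multiplicative (ZMod (m * n)) × H),
        ℓ ≤ Multiset.card S →
          ∃ T, T ≤ S ∧ T ≠ 0 ∧ (k * m * n) ∣ Multiset.card T ∧ IsOneProdSeq T}
      (k * m * n + D - 1) := by
  have hH : 0 < Fintype.card H := Fintype.card_pos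
  have hn0 : 0 < n := by
    have : 0 < 2 * Fintype.card H := by omega
    omega
  have hN : 0 < m * n := Nat.mul_pos (by omega) hn0
  have hnt : Nontrivial H := by
    by_contra hh
    rw [not_nontrivial_iff_subsingleton] at hh
    have := Monoid.exp_eq_one_iff.2 hh
    omega
  obtain ⟨hD1, hD2⟩ := hD
  simp only [Dav.oneProd_iff, Set.mem_ofPred_eq] at hD1
  have hDN : m * n + 1 ≤ D := Dav.D_lower hN hnt hD1
  have hkN : 0 < k * m * n := by rw [mul_assoc]; exact Nat.mul_pos (by omega) hN
  constructor
  · simp only [Dav.oneProd_iff, Set.mem_ofPred_eq]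
    intro S hS
    obtain ⟨T, h1, h2, h3⟩ := Dav.upper hexp hm hn hk hD1 hDN S (by rw [← mul_assoc]; omega)
    rw [← mul_assoc] at h2
    refine ⟨T, h1, ?_, by rw [h2], h3⟩
    rw [← Multiset.card_pos, h2]
    exact hkN
  · intro l hl
    simp only [Dav.oneProd_iff, Set.mem_ofPred_eq] at hl
    by_contra hlt
    have hnot : ¬ (D ≤ D - 1) := by omega
    have hS0 : ¬ ∀ S : Multiset (Multiplicative (ZMod (m * n)) × H),
        D - 1 ≤ Multiset.card S → ∃ T, T ≤ S ∧ T ≠ 0 ∧ T.prod = 1 := by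
      intro hh
      apply hnot
      apply hD2
      simpa only [Dav.oneProd_iff, Set.mem_ofPred_eq] using hh
    push Not at hS0
    obtain ⟨S0, hc0, hS0⟩ := hS0
    obtain ⟨T, hT, hT0, hTd, hTp⟩ := hl (S0 + Multiset.replicate (k * m * n - 1) 1) (by
      rw [Multiset.card_add, Multiset.card_replicate]; omega)
    obtain ⟨T0, T1, h0, h1, rfl⟩ : ∃ T0 T1, T0 ≤ S0 ∧
        T1 ≤ Multiset.replicate (k * m * n - 1) 1 ∧ T = T0 + T1 := by
      classical
      refine ⟨T ∩ S0, T - S0, Multiset.inter_le_right, ?_, ?_⟩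
      · rw [tsub_le_iff_left]; exact hT
      · ext a
        rw [Multiset.count_add, Multiset.count_inter, Multiset.count_sub]
        omega
    have hle := Nat.le_of_dvd (Multiset.card_pos.2 hT0) hTd
    have h1c := Multiset.card_le_card h1
    rw [Multiset.card_replicate] at h1c
    rw [Multiset.card_add] at hle
    rw [Dav.le_rep h1, Multiset.prod_add, Multiset.prod_replicate, one_pow, mul_one] at hTp
    refine hS0 T0 h0 ?_ hTp
    rw [← Multiset.card_pos]
    omega
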